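/- arXiv:2102.02479 — 2 statements merged into one kernel-verified Lean document; each statement's English description precedes it below -/
import Mathlib

section
/- Let A be a Hopf algebra over an algebraically closed field k with bijective antipode, and let R be a left or right A-Galois object. If A is homologically smooth, then cd(A) = cd(R). -/
open TensorProduct CategoryTheory

universe u

namespace QuesProj

/-! ## Projective dimension via Ext -/

/-- The projective dimension of an object of an abelian category with enough projectives:
the supremum of the degrees in which some `Ext` group out of it is nonzero. -/
noncomputable def extPD {C : Type (u+1)} [Category.{u} C] [Abelian C] [EnoughProjectives C]
    (V : C) : ℕ∞ :=
  sSup {n : ℕ∞ | ∃ m : ℕ, n = (m : ℕ∞) ∧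
    ∃ W : C, Nontrivial (((Ext ℤ C m).obj (Opposite.op V)).obj W)}

/-! ## Comodules, comodule algebras and Hopf-Galois objects -/

section Coaction

variable (k : Type u) [Field k]
variable (A : Type u) [AddCommGroup A] [Module k A] [Coalgebra k A]
variable (V : Type u) [AddCommGroup V] [Module k V]

/-- A right `A`-comodule structure on `V`. -/
structure RightCoaction where
  ρ : V →ₗ[k] V ⊗[k] A
  coassoc : (TensorProduct.assoc k V A A).toLinearMap ∘ₗ ρ.rTensor A ∘ₗ ρ
      = (Coalgebra.comul (R := k) (A := A)).lTensor V ∘ₗ ρ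
  counit_comp : (TensorProduct.rid k V).toLinearMap ∘ₗ
      (Coalgebra.counit (R := k) (A := A)).lTensor V ∘ₗ ρ = LinearMap.id

variable {k A V}

/-- A linear map between right comodules is colinear. -/
def IsColinear {W : Type u} [AddCommGroup W] [Module k W]
    (coV : RightCoaction k A V) (coW : RightCoaction k A W) (f : V →ₗ[k] W) : Prop :=
  coW.ρ ∘ₗ f = f.rTensor A ∘ₗ coV.ρ

end Coaction

section ComodAlg

variable (k : Type u) [Field k]
variable (A : Type u) [Ring A] [Bialgebra k A]
variable (R : Type u) [Ring R] [Algebra k R]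

/-- A right `A`-comodule algebra structure on `R`. -/
structure RightComodAlg where
  ρ : R →ₗ[k] R ⊗[k] A
  coassoc : (TensorProduct.assoc k R A A).toLinearMap ∘ₗ ρ.rTensor A ∘ₗ ρ
      = (Coalgebra.comul (R := k) (A := A)).lTensor R ∘ₗ ρ
  counit_comp : (TensorProduct.rid k R).toLinearMap ∘ₗ
      (Coalgebra.counit (R := k) (A := A)).lTensor R ∘ₗ ρ = LinearMap.id
  map_one : ρ 1 = 1
  map_mul : ∀ x y : R, ρ (x * y) = ρ x * ρ y

/-- A left `A`-comodule algebra structure on `R`. -/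
structure LeftComodAlg where
  lam : R →ₗ[k] A ⊗[k] R
  coassoc : (TensorProduct.assoc k A A R).toLinearMap ∘ₗ
      (Coalgebra.comul (R := k) (A := A)).rTensor R ∘ₗ lam = lam.lTensor A ∘ₗ lam
  counit_comp : (TensorProduct.lid k R).toLinearMap ∘ₗ
      (Coalgebra.counit (R := k) (A := A)).rTensor R ∘ₗ lam = LinearMap.id
  map_one : lam 1 = 1
  map_mul : ∀ x y : R, lam (x * y) = lam x * lam y

variable {k A R}

/-- The coaction of a right comodule algebra, as a `RightCoaction`. -/
def RightComodAlg.toCoaction (c : RightComodAlg k A R) : RightCoaction k A R :=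
  ⟨c.ρ, c.coassoc, c.counit_comp⟩

/-- The canonical (Galois) map `R ⊗ R → A ⊗ R` of a left comodule algebra,
`x ⊗ y ↦ x₍₋₁₎ ⊗ x₍₀₎y`. -/
noncomputable def LeftComodAlg.can (c : LeftComodAlg k A R) : R ⊗[k] R →ₗ[k] A ⊗[k] R :=
  (LinearMap.mul' k R).lTensor A ∘ₗ (TensorProduct.assoc k A R R).toLinearMap ∘ₗ
    c.lam.rTensor R

/-- The canonical (Galois) map `R ⊗ R → R ⊗ A` of a right comodule algebra,
`x ⊗ y ↦ xy₍₀₎ ⊗ y₍₁₎`. -/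
noncomputable def RightComodAlg.can (c : RightComodAlg k A R) : R ⊗[k] R →ₗ[k] R ⊗[k] A :=
  (LinearMap.mul' k R).rTensor A ∘ₗ (TensorProduct.assoc k R R A).symm.toLinearMap ∘ₗ
    c.ρ.lTensor R

/-- `R` is a left `A`-Galois object via the left comodule algebra structure `c`:
it is nonzero and the canonical map is bijective. -/
def LeftComodAlg.IsGalois (c : LeftComodAlg k A R) : Prop :=
  Nontrivial R ∧ Function.Bijective c.can

/-- `R` is a right `A`-Galois object via the right comodule algebra structure `c`. -/
def RightComodAlg.IsGalois (c : RightComodAlg k A R) : Prop :=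
  Nontrivial R ∧ Function.Bijective c.can

/-- `R` is a left or right `A`-Galois object. -/
def IsGaloisObject (k A R : Type u) [Field k] [Ring A] [Bialgebra k A] [Ring R]
    [Algebra k R] : Prop :=
  (∃ c : LeftComodAlg k A R, c.IsGalois) ∨ (∃ c : RightComodAlg k A R, c.IsGalois)

end ComodAlg

/-! ## Trivial module, cohomological dimensions, smoothness -/

section Trivial

variable (k : Type u) [Field k] (A : Type u) [Ring A] [Bialgebra k A]

/-- The trivial module of a bialgebra: the base field with action through the counit. -/
def TrivialModule (_A : Type u) : Type u := k

instance : AddCommGroup (TrivialModule k A) := inferInstanceAs (AddCommGroup k)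

noncomputable instance : Module A (TrivialModule k A) :=
  Module.compHom k (Bialgebra.counitAlgHom k A).toRingHom

/-- The cohomological dimension of a Hopf algebra: the projective dimension of the
trivial module. -/
noncomputable def cdHopf : ℕ∞ := extPD (ModuleCat.of A (TrivialModule k A))

end Trivial

section Bimodule

attribute [local instance] TensorProduct.Algebra.module

variable (k : Type u) [Field k] (R : Type u) [Ring R] [Algebra k R]

/-- `k`-scalars commute appropriately with the enveloping algebra action. -/
noncomputable def envTower : IsScalarTower k (R ⊗[k] Rᵐᵒᵖ) R := by
  constructor
  intro c e v
  show TensorProduct.Algebra.moduleAux (c • e) v = c • TensorProduct.Algebra.moduleAux e v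
  rw [map_smul]
  rfl

attribute [local instance] envTower

/-- The Hochschild cohomological dimension of a `k`-algebra `R`: the projective dimension
of `R` in the category of `R`-bimodules, i.e. of modules over `R ⊗ Rᵐᵒᵖ`. -/
noncomputable def cdAlg : ℕ∞ := extPD (ModuleCat.of (R ⊗[k] Rᵐᵒᵖ) R)

/-- `FgProjDimLE S n M` says that the `S`-module `M` admits a resolution
`0 → P_n → ⋯ → P_0 → M → 0` by finitely generated projective `S`-modules. -/
def FgProjDimLE (S : Type u) [Ring S] :
    ℕ → (M : Type u) → [AddCommGroup M] → [Module S M] → Prop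
  | 0, M, _, _ => Module.Finite S M ∧ Module.Projective S M
  | (n+1), M, _, _ => ∃ (P : Type u) (_ : AddCommGroup P) (_ : Module S P) (φ : P →ₗ[S] M),
      Module.Finite S P ∧ Module.Projective S P ∧ Function.Surjective φ ∧
        FgProjDimLE S n (LinearMap.ker φ)

/-- A `k`-algebra `R` is homologically smooth if `R` admits a finite resolution by finitely
generated projective `R`-bimodules. -/
def IsHomSmooth : Prop :=
  ∃ n : ℕ, FgProjDimLE (R ⊗[k] Rᵐᵒᵖ) n R

end Bimodule


/-! ## The trivial coaction and tensor product coactions -/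

section UnitTensor

variable (k : Type u) [Field k] (A : Type u) [Ring A] [Bialgebra k A]

/-- The coaction on the monoidal unit `k`. -/
noncomputable def unitCoactMap : k →ₗ[k] k ⊗[k] A :=
  (Algebra.linearMap k A).lTensor k ∘ₗ (TensorProduct.lid k k).symm.toLinearMap

/-- The trivial right coaction on `k`. -/
noncomputable def unitCoaction : RightCoaction k A k where
  ρ := unitCoactMap k A
  coassoc := by
    unfold unitCoactMap
    apply LinearMap.ext_ring
    simp [Bialgebra.comul_one, Algebra.TensorProduct.one_def]
  counit_comp := by
    unfold unitCoactMap
    apply LinearMap.ext_ring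
    simp [Bialgebra.counit_one]

variable {k A}

/-- The canonical coaction on the tensor product of two comodules. -/
noncomputable def tensorCoactMap {V W : Type u} [AddCommGroup V] [Module k V]
    [AddCommGroup W] [Module k W] (ρV : V →ₗ[k] V ⊗[k] A) (ρW : W →ₗ[k] W ⊗[k] A) :
    V ⊗[k] W →ₗ[k] (V ⊗[k] W) ⊗[k] A :=
  (LinearMap.mul' k A).lTensor (V ⊗[k] W) ∘ₗ
    (TensorProduct.tensorTensorTensorComm k V A W A).toLinearMap ∘ₗ TensorProduct.map ρV ρW

end UnitTensor

/-! ## Haar integrals, modular functionals and averaging -/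


section Haar

variable {k : Type u} [Field k] {A : Type u} [Ring A] [HopfAlgebra k A]

/-- Convolution product of two linear functionals on a coalgebra. -/
noncomputable def convF (ψ φ : A →ₗ[k] k) : A →ₗ[k] k :=
  LinearMap.mul' k k ∘ₗ TensorProduct.map ψ φ ∘ₗ Coalgebra.comul

/-- Convolution `ψ ∗ g` of a functional with a linear endomap. -/
noncomputable def convL (ψ : A →ₗ[k] k) (g : A →ₗ[k] A) : A →ₗ[k] A :=
  (TensorProduct.lid k A).toLinearMap ∘ₗ TensorProduct.map ψ g ∘ₗ Coalgebra.comul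

/-- Convolution `g ∗ ψ` of a linear endomap with a functional. -/
noncomputable def convR (g : A →ₗ[k] A) (ψ : A →ₗ[k] k) : A →ₗ[k] A :=
  (TensorProduct.rid k A).toLinearMap ∘ₗ TensorProduct.map g ψ ∘ₗ Coalgebra.comul

/-- `h : A → k` is a Haar integral: `h(a₍₁₎)a₍₂₎ = h(a)1 = h(a₍₂₎)a₍₁₎` and `h(1) = 1`. -/
structure IsHaar (h : A →ₗ[k] k) : Prop where
  left_inv : (TensorProduct.lid k A).toLinearMap ∘ₗ h.rTensor A ∘ₗ
      (Coalgebra.comul (R := k) (A := A)) = Algebra.linearMap k A ∘ₗ h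
  right_inv : (TensorProduct.rid k A).toLinearMap ∘ₗ h.lTensor A ∘ₗ
      (Coalgebra.comul (R := k) (A := A)) = Algebra.linearMap k A ∘ₗ h
  map_one : h 1 = 1

/-- A Hopf algebra is cosemisimple iff it admits a Haar integral. -/
def IsCosemisimple (k : Type u) [Field k] (A : Type u) [Ring A] [HopfAlgebra k A] : Prop :=
  ∃ h : A →ₗ[k] k, IsHaar h

/-- The modular automorphism `σ = ψ ∗ id ∗ ψ` associated to a functional `ψ`. -/
noncomputable def sigmaOf (ψ : A →ₗ[k] k) : A →ₗ[k] A := convL ψ (convR LinearMap.id ψ)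

/-- A modular functional on a cosemisimple Hopf algebra with Haar integral `h`:
a convolution invertible functional `ψ` with `S² = ψ ∗ id ∗ ψ⁻¹`, such that
`σ = ψ ∗ id ∗ ψ` is an algebra automorphism and `h(ab) = h(b σ(a))`. -/
structure ModularFunctional (h : A →ₗ[k] k) : Type u where
  ψ : A →ₗ[k] k
  ψinv : A →ₗ[k] k
  inv_left : convF ψ ψinv = Coalgebra.counit
  inv_right : convF ψinv ψ = Coalgebra.counit
  antipode_sq : (HopfAlgebra.antipode (R := k) (A := A)) ∘ₗ HopfAlgebra.antipode (R := k) (A := A)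
      = convL ψ (convR LinearMap.id ψinv)
  sigma_one : sigmaOf ψ 1 = 1
  sigma_mul : ∀ a b : A, sigmaOf ψ (a * b) = sigmaOf ψ a * sigmaOf ψ b
  sigma_bijective : Function.Bijective (sigmaOf ψ)
  kms : ∀ a b : A, h (a * b) = h (b * sigmaOf ψ a)

variable {V W : Type u} [AddCommGroup V] [Module k V] [AddCommGroup W] [Module k W]

/-- The averaging of a linear map `f : V → W` between right `A`-comodules with respect to
a linear functional `h` on `A`: `v ↦ h(f(v₍₀₎)₍₁₎ S(v₍₁₎)) f(v₍₀₎)₍₀₎`. -/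
noncomputable def avg (ρV : V →ₗ[k] V ⊗[k] A) (ρW : W →ₗ[k] W ⊗[k] A)
    (h : A →ₗ[k] k) (f : V →ₗ[k] W) : V →ₗ[k] W :=
  (TensorProduct.rid k W).toLinearMap ∘ₗ h.lTensor W ∘ₗ (LinearMap.mul' k A).lTensor W ∘ₗ
    (TensorProduct.assoc k W A A).toLinearMap ∘ₗ ρW.rTensor A ∘ₗ
      (HopfAlgebra.antipode (R := k) (A := A)).lTensor W ∘ₗ f.rTensor A ∘ₗ ρV

/-- The twist `ρ = id ∗ ψ⁻²` of a right comodule (algebra), `x ↦ ψ⁻²(x₍₁₎)x₍₀₎`. -/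
noncomputable def comodTwist (φ : A →ₗ[k] k) (ρV : V →ₗ[k] V ⊗[k] A) : V →ₗ[k] V :=
  (TensorProduct.rid k V).toLinearMap ∘ₗ φ.lTensor V ∘ₗ ρV

/-- The twist `θ = ψ² ∗ id : A → A`. -/
noncomputable def thetaOf (φ : A →ₗ[k] k) : A →ₗ[k] A := convL φ LinearMap.id

end Haar


end QuesProj

namespace QuesProj

open CategoryTheory.Limits

section Homological

variable {C : Type (u+1)} [Category.{u} C] [Abelian C]

/-- Vanishing of the degree `n` cohomology of `Hom(P, Y)` for a projective resolution `P`. -/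
def CocyclesBound {X : C} (P : ProjectiveResolution X) (Y : C) (n : ℕ) : Prop :=
  ∀ f : P.complex.X n ⟶ Y, P.complex.d (n + 1) n ≫ f = 0 →
    ∃ g : P.complex.X ((ComplexShape.down ℕ).next n) ⟶ Y, P.complex.d n _ ≫ g = f

lemma subsingleton_ext_functor_iff [EnoughProjectives C] {X : C} (P : ProjectiveResolution X)
    (Y : C) (n : ℕ) :
    Subsingleton (((Ext ℤ C n).obj (Opposite.op X)).obj Y) ↔ CocyclesBound P Y n := by
  rw [← ModuleCat.isZero_iff_subsingleton, (P.isoExt n Y).isZero_iff,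
    ← HomologicalComplex.exactAt_iff_isZero_homology,
    HomologicalComplex.exactAt_iff' _ ((ComplexShape.down ℕ).next n) n (n + 1)
      (by cases n <;> simp) (by simp),
    ShortComplex.moduleCat_exact_iff]
  rfl

lemma subsingleton_abelianExt_iff [HasExt.{u} C] {X : C} (P : ProjectiveResolution X) (Y : C)
    (n : ℕ) : Subsingleton (Abelian.Ext.{u} X Y n) ↔ CocyclesBound P Y n := by
  cases n with
  | zero =>
    have hd (h : Subsingleton (Abelian.Ext.{u} X Y 0)) (f : P.complex.X 0 ⟶ Y)
        (hf : P.complex.d 1 0 ≫ f = 0) : f = 0 := by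
      have hz (g : X ⟶ Y) : g = 0 :=
        Abelian.Ext.homEquiv₀.symm.injective (Subsingleton.elim _ _)
      have h0 : P.exact₀.desc f hf = 0 := hz _
      rw [← P.exact₀.g_desc f hf, h0, comp_zero]
    refine ⟨fun h f hf => ⟨0, ?_⟩, fun h => subsingleton_of_forall_eq 0 fun α => ?_⟩
    · rw [hd h f hf, comp_zero]
    · obtain ⟨f, hf, rfl⟩ := P.extMk_surjective α 1 rfl
      obtain ⟨g, hg⟩ := h f hf
      rw [P.complex.shape _ _ (by simp), zero_comp] at hg
      subst hg
      simp
  | succ p =>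
    have hp : (ComplexShape.down ℕ).next (p + 1) = p := by simp
    unfold CocyclesBound
    rw [hp]
    refine ⟨fun h f hf => ?_, fun h => subsingleton_of_forall_eq 0 fun α => ?_⟩
    · exact (P.extMk_eq_zero_iff f (p + 2) rfl hf p rfl).1 (Subsingleton.elim _ _)
    · obtain ⟨f, hf, rfl⟩ := P.extMk_surjective α (p + 2) rfl
      exact (P.extMk_eq_zero_iff f (p + 2) rfl hf p rfl).2 (h f hf)

lemma nontrivial_ext_functor_iff [EnoughProjectives C] [HasExt.{u} C] (X Y : C) (n : ℕ) :
    Nontrivial (((Ext ℤ C n).obj (Opposite.op X)).obj Y) ↔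
      ¬ Subsingleton (Abelian.Ext.{u} X Y n) := by
  rw [← not_subsingleton_iff_nontrivial, subsingleton_ext_functor_iff (projectiveResolution X),
    subsingleton_abelianExt_iff (projectiveResolution X)]

lemma subsingleton_ext_iff_of_adjunction {D : Type (u+1)} [Category.{u} D] [Abelian D]
    [EnoughProjectives C] [EnoughProjectives D] [HasExt.{u} C] [HasExt.{u} D]
    {L : C ⥤ D} {G : D ⥤ C} (adj : L ⊣ G) [L.Additive] [L.PreservesHomology] [G.PreservesEpimorphisms]
    (X : C) (M : D) (n : ℕ) :
    Subsingleton (Abelian.Ext.{u} (L.obj X) M n) ↔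
      Subsingleton (Abelian.Ext.{u} X (G.obj M) n) := by
  have : L.IsLeftAdjoint := ⟨_, ⟨adj⟩⟩
  have : L.PreservesProjectiveObjects := ⟨fun {X} hX => adj.map_projective X hX⟩
  let P := projectiveResolution X
  have : G.Additive := adj.right_adjoint_additive
  rw [subsingleton_abelianExt_iff P, subsingleton_abelianExt_iff (L.mapProjectiveResolution P)]
  change (∀ f : L.obj (P.complex.X n) ⟶ M, L.map (P.complex.d (n + 1) n) ≫ f = 0 →
    ∃ g : L.obj (P.complex.X ((ComplexShape.down ℕ).next n)) ⟶ M,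
      L.map (P.complex.d n _) ≫ g = f) ↔ _
  constructor
  · intro h f hf
    obtain ⟨g, hg⟩ := h ((adj.homEquiv _ _).symm f) (by
      rw [← adj.homEquiv_naturality_left_symm, hf, adj.homEquiv_counit, L.map_zero, zero_comp])
    refine ⟨adj.homEquiv _ _ g, ?_⟩
    rw [← adj.homEquiv_naturality_left, hg, Equiv.apply_symm_apply]
  · intro h f hf
    obtain ⟨g, hg⟩ := h (adj.homEquiv _ _ f) (by
      rw [← adj.homEquiv_naturality_left, hf, adj.homEquiv_unit, G.map_zero, comp_zero])
    refine ⟨(adj.homEquiv _ _).symm g, ?_⟩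
    rw [← adj.homEquiv_naturality_left_symm, hg, Equiv.symm_apply_apply]

lemma subsingleton_ext_of_retract [HasExt.{u} C] {X X' Y Y' : C} (hX : Retract X X')
    (hY : Retract Y Y') {n : ℕ} (h : Subsingleton (Abelian.Ext.{u} X' Y' n)) :
    Subsingleton (Abelian.Ext.{u} X Y n) := by
  refine subsingleton_of_forall_eq 0 fun α => ?_
  let β : Abelian.Ext.{u} X' Y' n := (Abelian.Ext.mk₀ hX.r).comp
    (α.comp (Abelian.Ext.mk₀ hY.i) (add_zero n)) (zero_add n)
  have hβ : ((Abelian.Ext.mk₀ hX.i).comp β (zero_add n)).comp (Abelian.Ext.mk₀ hY.r)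
      (add_zero n) = α := by
    simp [β]
  rw [← hβ, Subsingleton.elim β 0, Abelian.Ext.comp_zero, Abelian.Ext.zero_comp]

end Homological

section FiniteResolutions

variable {S : Type u} [Ring S]

lemma projective_moduleCat_of (P : Type u) [AddCommGroup P] [Module S P] [Module.Projective S P] :
    Projective (ModuleCat.of S P) :=
  (IsProjective.iff_projective P).1 inferInstance

lemma FgProjDimLE.finite {m : ℕ} {X : Type u} [AddCommGroup X] [Module S X]
    (h : FgProjDimLE S m X) : Module.Finite S X := by
  cases m with
  | zero => exact h.1
  | succ m =>
    obtain ⟨P, _, _, φ, hfin, -, hφ, -⟩ := h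
    exact Module.Finite.of_surjective φ hφ

lemma FgProjDimLE.subsingleton_ext {m : ℕ} {X : Type u} [AddCommGroup X] [Module S X]
    (h : FgProjDimLE S m X) {n : ℕ} (hn : m < n) (W : ModuleCat.{u} S) :
    Subsingleton (Abelian.Ext.{u} (ModuleCat.of S X) W n) := by
  induction m generalizing X n with
  | zero =>
    obtain ⟨-, hP⟩ := h
    have := projective_moduleCat_of (S := S) X
    obtain ⟨n, rfl⟩ := Nat.exists_eq_succ_of_ne_zero hn.ne'
    exact Abelian.Ext.subsingleton_of_projective _ _ n
  | succ m ih =>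
    obtain ⟨P, _, _, φ, -, hP, hφ, hK⟩ := h
    have := projective_moduleCat_of (S := S) P
    obtain ⟨n, rfl⟩ := Nat.exists_eq_succ_of_ne_zero (show n ≠ 0 by omega)
    have hsub := ih hK (show m < n by omega)
    refine subsingleton_of_forall_eq 0 fun x => ?_
    obtain ⟨y, rfl⟩ := Abelian.Ext.contravariant_sequence_exact₃
      (LinearMap.shortExact_shortComplexKer hφ) W x (Abelian.Ext.eq_zero_of_projective _)
      (add_comm 1 n)
    rw [Subsingleton.elim y 0, Abelian.Ext.comp_zero]

lemma subsingleton_ext_zero_iff (X Y : ModuleCat.{u} S) :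
    Subsingleton (Abelian.Ext.{u} X Y 0) ↔ ∀ f : X →ₗ[S] Y, f = 0 := by
  rw [Abelian.Ext.homEquiv₀.subsingleton_congr, ModuleCat.homEquiv.subsingleton_congr]
  exact ⟨fun h f => Subsingleton.elim _ _, subsingleton_of_forall_eq 0⟩

/-- Surjecting onto the next Ext group, in terms of extending linear maps. -/
lemma subsingleton_ext_one_iff {P X : Type u} [AddCommGroup P] [Module S P] [AddCommGroup X]
    [Module S X] [Module.Projective S P] {φ : P →ₗ[S] X} (hφ : Function.Surjective φ)
    (W : ModuleCat.{u} S) :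
    Subsingleton (Abelian.Ext.{u} (ModuleCat.of S X) W 1) ↔
      ∀ f : LinearMap.ker φ →ₗ[S] W, ∃ g : P →ₗ[S] W, g ∘ₗ (LinearMap.ker φ).subtype = f := by
  have := projective_moduleCat_of (S := S) P
  have hS := LinearMap.shortExact_shortComplexKer hφ
  constructor
  · intro h f
    obtain ⟨y, hy⟩ := Abelian.Ext.contravariant_sequence_exact₁ hS W
      (Abelian.Ext.mk₀ (ModuleCat.ofHom f)) (add_comm 1 0) (Subsingleton.elim _ _)
    obtain ⟨g, rfl⟩ := (Abelian.Ext.mk₀_bijective _ _).2 y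
    rw [Abelian.Ext.mk₀_comp_mk₀] at hy
    have := (Abelian.Ext.mk₀_bijective _ _).1 hy
    exact ⟨g.hom, congrArg ModuleCat.Hom.hom this⟩
  · intro h
    refine subsingleton_of_forall_eq 0 fun x => ?_
    obtain ⟨y, rfl⟩ := Abelian.Ext.contravariant_sequence_exact₃ hS W x
      (Abelian.Ext.eq_zero_of_projective _) (add_comm 1 0)
    obtain ⟨f, rfl⟩ := (Abelian.Ext.mk₀_bijective _ _).2 y
    obtain ⟨g, hg⟩ := h f.hom
    have : f = ModuleCat.ofHom (LinearMap.ker φ).subtype ≫ ModuleCat.ofHom g :=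
      ModuleCat.hom_ext hg.symm
    rw [this, ← Abelian.Ext.mk₀_comp_mk₀,
      ← Abelian.Ext.comp_assoc _ _ _ (by rfl) (by rfl) (by rfl)]
    have h0 : hS.extClass.comp (Abelian.Ext.mk₀ (ModuleCat.ofHom (LinearMap.ker φ).subtype))
      (add_zero 1) = 0 := hS.extClass_comp
    erw [h0]
    rw [Abelian.Ext.zero_comp]

lemma subsingleton_ext_succ_iff {P X : Type u} [AddCommGroup P] [Module S P] [AddCommGroup X]
    [Module S X] [Module.Projective S P] {φ : P →ₗ[S] X} (hφ : Function.Surjective φ)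
    (W : ModuleCat.{u} S) (n : ℕ) :
    Subsingleton (Abelian.Ext.{u} (ModuleCat.of S X) W (n + 2)) ↔
      Subsingleton (Abelian.Ext.{u} (ModuleCat.of S (LinearMap.ker φ)) W (n + 1)) := by
  have := projective_moduleCat_of (S := S) P
  have hS := LinearMap.shortExact_shortComplexKer hφ
  constructor <;> intro h <;> refine subsingleton_of_forall_eq 0 fun x => ?_
  · obtain ⟨y, rfl⟩ := Abelian.Ext.contravariant_sequence_exact₁ hS W x
      (add_comm 1 (n + 1)) (Subsingleton.elim _ _)
    rw [Abelian.Ext.eq_zero_of_projective y, Abelian.Ext.comp_zero]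
  · obtain ⟨y, rfl⟩ := Abelian.Ext.contravariant_sequence_exact₃ hS W x
      (Abelian.Ext.eq_zero_of_projective _) (add_comm 1 (n + 1))
    rw [Subsingleton.elim y 0, Abelian.Ext.comp_zero]

/-- For modules with a finite resolution by finitely generated projectives, vanishing of `Ext`
passes to direct sums in the second variable. -/
lemma FgProjDimLE.subsingleton_ext_finsupp {m : ℕ} {X : Type u} [AddCommGroup X] [Module S X]
    (h : FgProjDimLE S m X) {n : ℕ} (I W : Type u) [AddCommGroup W] [Module S W]
    (hW : Subsingleton (Abelian.Ext.{u} (ModuleCat.of S X) (ModuleCat.of S W) n)) :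
    Subsingleton (Abelian.Ext.{u} (ModuleCat.of S X) (ModuleCat.of S (I →₀ W)) n) := by
  classical
  induction m generalizing X n with
  | zero =>
    cases n with
    | zero =>
      rw [subsingleton_ext_zero_iff] at hW ⊢
      exact fun f => LinearMap.ext fun x => Finsupp.ext fun i =>
        LinearMap.congr_fun (hW (Finsupp.lapply i ∘ₗ f)) x
    | succ n => exact h.subsingleton_ext n.succ_pos _
  | succ m ih =>
    match n with
    | 0 =>
      rw [subsingleton_ext_zero_iff] at hW ⊢
      exact fun f => LinearMap.ext fun x => Finsupp.ext fun i =>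
        LinearMap.congr_fun (hW (Finsupp.lapply i ∘ₗ f)) x
    | 1 =>
      obtain ⟨P, _, _, φ, -, hP, hφ, hK⟩ := h
      rw [subsingleton_ext_one_iff hφ] at hW ⊢
      intro f
      obtain ⟨s, hs⟩ := hK.finite.1
      choose g hg using fun i => hW (Finsupp.lapply i ∘ₗ f)
      let F : Finset I := s.biUnion fun x => (f x).support
      have hF (i : I) (hi : i ∉ F) : Finsupp.lapply i ∘ₗ f = 0 := by
        refine LinearMap.ext_on hs fun x hx => ?_
        by_contra hne
        exact hi (Finset.mem_biUnion.2 ⟨x, hx, Finsupp.mem_support_iff.2 hne⟩)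
      refine ⟨∑ i ∈ F, Finsupp.lsingle i ∘ₗ g i, LinearMap.ext fun x => Finsupp.ext fun i => ?_⟩
      have hgi (i : I) : g i (x : P) = f x i := LinearMap.congr_fun (hg i) x
      simp only [LinearMap.comp_apply, LinearMap.sum_apply, Submodule.subtype_apply,
        Finsupp.lsingle_apply, Finsupp.finsetSum_apply, hgi, Finsupp.single_apply,
        Finset.sum_ite_eq']
      split_ifs with hi
      · rfl
      · exact (LinearMap.congr_fun (hF i hi) x).symm
    | n + 2 =>
      obtain ⟨P, _, _, φ, -, hP, hφ, hK⟩ := h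
      rw [subsingleton_ext_succ_iff hφ] at hW ⊢
      exact ih hK hW

lemma subsingleton_ext_of_surjective {X W W' : Type u} [AddCommGroup X] [Module S X]
    [AddCommGroup W] [Module S W] [AddCommGroup W'] [Module S W'] {n : ℕ}
    (htop : ∀ V : ModuleCat.{u} S, Subsingleton (Abelian.Ext.{u} (ModuleCat.of S X) V (n + 1)))
    {p : W →ₗ[S] W'} (hp : Function.Surjective p)
    (hW : Subsingleton (Abelian.Ext.{u} (ModuleCat.of S X) (ModuleCat.of S W) n)) :
    Subsingleton (Abelian.Ext.{u} (ModuleCat.of S X) (ModuleCat.of S W') n) := by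
  refine subsingleton_of_forall_eq 0 fun x => ?_
  have := htop (ModuleCat.of S (LinearMap.ker p))
  obtain ⟨y, rfl⟩ := Abelian.Ext.covariant_sequence_exact₃ _
    (LinearMap.shortExact_shortComplexKer hp) x rfl (Subsingleton.elim _ _)
  rw [Subsingleton.elim y 0, Abelian.Ext.zero_comp]

end FiniteResolutions

section TranslationMap

variable {k A R : Type u} [Field k] [Ring A] [Bialgebra k A] [Ring R] [Algebra k R]

/-- The coaction of a left comodule algebra, as an algebra homomorphism. -/
noncomputable def LeftComodAlg.lamHom (c : LeftComodAlg k A R) : R →ₐ[k] A ⊗[k] R :=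
  AlgHom.ofLinearMap c.lam c.map_one c.map_mul

/-- The canonical map, viewed as defined on the enveloping algebra. -/
noncomputable def LeftComodAlg.canEnv (c : LeftComodAlg k A R) :
    R ⊗[k] Rᵐᵒᵖ →ₗ[k] A ⊗[k] R :=
  c.can ∘ₗ (MulOpposite.opLinearEquiv k (M := R)).symm.toLinearMap.lTensor R

lemma LeftComodAlg.can_tmul (c : LeftComodAlg k A R) (x y : R) :
    c.can (x ⊗ₜ y) = c.lam x * (1 ⊗ₜ y) := by
  simp only [LeftComodAlg.can, LinearMap.comp_apply, LinearMap.rTensor_tmul]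
  induction c.lam x with
  | zero => simp
  | add a b ha hb => simp only [TensorProduct.add_tmul, map_add, ha, hb, add_mul]
  | tmul a r => simp

lemma LeftComodAlg.canEnv_tmul (c : LeftComodAlg k A R) (x : R) (y : Rᵐᵒᵖ) :
    c.canEnv (x ⊗ₜ y) = c.lam x * (1 ⊗ₜ y.unop) :=
  c.can_tmul x y.unop

lemma LeftComodAlg.canEnv_bijective {c : LeftComodAlg k A R} (hc : c.IsGalois) :
    Function.Bijective c.canEnv :=
  hc.2.comp (TensorProduct.congr (LinearEquiv.refl k R)
    (MulOpposite.opLinearEquiv k (M := R)).symm).bijective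

lemma LeftComodAlg.canEnv_one (c : LeftComodAlg k A R) : c.canEnv 1 = 1 := by
  rw [Algebra.TensorProduct.one_def, canEnv_tmul, c.map_one, one_mul]
  rfl

lemma LeftComodAlg.canEnv_tmul_mul (c : LeftComodAlg k A R) (x : R) (y : Rᵐᵒᵖ)
    (t : R ⊗[k] Rᵐᵒᵖ) :
    c.canEnv (x ⊗ₜ y * t) = c.lam x * c.canEnv t * (1 ⊗ₜ y.unop) := by
  induction t with
  | zero => simp
  | add a b ha hb => rw [mul_add, map_add, ha, hb, map_add, mul_add, add_mul]
  | tmul x' y' =>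
    rw [Algebra.TensorProduct.tmul_mul_tmul, canEnv_tmul, canEnv_tmul, c.map_mul,
      MulOpposite.unop_mul, mul_assoc, mul_assoc, mul_assoc, Algebra.TensorProduct.tmul_mul_tmul,
      one_mul]

/-- The canonical map as a linear equivalence from the enveloping algebra. -/
noncomputable def LeftComodAlg.canEquiv {c : LeftComodAlg k A R} (hc : c.IsGalois) :
    R ⊗[k] Rᵐᵒᵖ ≃ₗ[k] A ⊗[k] R :=
  LinearEquiv.ofBijective c.canEnv (canEnv_bijective hc)

variable {c : LeftComodAlg k A R} (hc : c.IsGalois)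

lemma LeftComodAlg.canEnv_mul_of_eq {t s : R ⊗[k] Rᵐᵒᵖ} {a : A} (ht : c.canEnv s = a ⊗ₜ 1) :
    c.canEnv (t * s) = c.canEnv t * (a ⊗ₜ 1) := by
  induction t with
  | zero => simp
  | add x y hx hy => rw [add_mul, map_add, hx, hy, map_add, add_mul]
  | tmul x y =>
    rw [canEnv_tmul_mul, ht, canEnv_tmul, mul_assoc, mul_assoc]
    simp

/-- The translation algebra map `A → R ⊗ Rᵐᵒᵖ` of a left Galois object. -/
noncomputable def LeftComodAlg.transl : A →ₐ[k] R ⊗[k] Rᵐᵒᵖ :=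
  AlgHom.ofLinearMap ((canEquiv hc).symm.toLinearMap ∘ₗ (TensorProduct.mk k A R).flip 1)
    (by
      refine (canEquiv hc).symm_apply_eq.2 ?_
      exact c.canEnv_one.symm)
    (fun a b => by
      refine (canEquiv hc).symm_apply_eq.2 ?_
      refine Eq.trans ?_ (canEnv_mul_of_eq ((canEquiv hc).apply_symm_apply (b ⊗ₜ 1))).symm
      erw [(canEquiv hc).apply_symm_apply (a ⊗ₜ 1)]
      simp)

lemma LeftComodAlg.canEnv_transl (a : A) : c.canEnv (transl hc a) = a ⊗ₜ 1 :=
  (canEquiv hc).apply_symm_apply (a ⊗ₜ 1)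

lemma LeftComodAlg.canEnv_one_tmul_mul_transl (r : R) (a : A) :
    c.canEnv ((1 ⊗ₜ MulOpposite.op r) * transl hc a) = a ⊗ₜ r := by
  rw [canEnv_tmul_mul, canEnv_transl, c.map_one]
  simp

/-- The inverse of the canonical map, `a ⊗ r ↦ (1 ⊗ r) κ(a)`. -/
noncomputable def LeftComodAlg.translMul : A ⊗[k] R →ₗ[k] R ⊗[k] Rᵐᵒᵖ :=
  TensorProduct.lift (((LinearMap.mul k (R ⊗[k] Rᵐᵒᵖ)).compl₂ (transl hc).toLinearMap).comp
    (TensorProduct.mk k R Rᵐᵒᵖ 1 ∘ₗ (MulOpposite.opLinearEquiv k).toLinearMap)).flip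

@[simp] lemma LeftComodAlg.translMul_tmul (a : A) (r : R) :
    translMul hc (a ⊗ₜ r) = (1 ⊗ₜ MulOpposite.op r) * transl hc a := rfl

lemma LeftComodAlg.canEnv_translMul (z : A ⊗[k] R) : c.canEnv (translMul hc z) = z := by
  induction z with
  | zero => simp
  | add x y hx hy => rw [map_add, map_add, hx, hy]
  | tmul a r => rw [translMul_tmul, canEnv_one_tmul_mul_transl]

lemma LeftComodAlg.translMul_lam (x : R) : translMul hc (c.lam x) = x ⊗ₜ 1 := by
  apply (canEnv_bijective hc).1
  rw [canEnv_translMul, canEnv_tmul]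
  change _ = _ * 1
  rw [mul_one]

end TranslationMap

section TwistModule

variable {k A R : Type u} [Field k] [Ring A] [Bialgebra k A] [Ring R] [Algebra k R]

/-- The action of `A ⊗ R` on `X ⊗ R` by left multiplication on each factor. -/
noncomputable def tensorAct (k A R : Type u) [Field k] [Ring A] [Algebra k A] [Ring R]
    [Algebra k R] (X : Type u) [AddCommGroup X] [Module k X] [Module A X] [IsScalarTower k A X] :
    A ⊗[k] R →ₐ[k] Module.End k (X ⊗[k] R) :=
  Module.endTensorEndAlgHom.comp
    (Algebra.TensorProduct.map (Algebra.lsmul k k X) (Algebra.lmul k R))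

@[simp] lemma tensorAct_tmul {X : Type u} [AddCommGroup X] [Module k X] [Module A X]
    [IsScalarTower k A X] (a : A) (r : R) (v : X) (s : R) :
    tensorAct k A R X (a ⊗ₜ r) (v ⊗ₜ s) = (a • v) ⊗ₜ (r * s) := rfl

/-- The action of `R ⊗ Rᵐᵒᵖ` on `X ⊗ R`: the left factor acts diagonally through the coaction,
the right factor by right multiplication. -/
noncomputable def LeftComodAlg.twistAct (c : LeftComodAlg k A R) (X : Type u) [AddCommGroup X]
    [Module k X] [Module A X] [IsScalarTower k A X] :
    R ⊗[k] Rᵐᵒᵖ →ₐ[k] Module.End k (X ⊗[k] R) :=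
  Algebra.TensorProduct.lift ((tensorAct k A R X).comp c.lamHom)
    ((Module.End.lTensorAlgHom k R X).comp (Algebra.lsmul k k R)) (by
      intro x y
      change tensorAct k A R X (c.lam x) * _ = _ * tensorAct k A R X (c.lam x)
      generalize c.lam x = z
      induction z with
      | zero => simp
      | add a b ha hb => rw [map_add, add_mul, mul_add, ha, hb]
      | tmul a r =>
        refine TensorProduct.ext' fun v s => ?_
        change (a • v) ⊗ₜ (r * (s * y.unop)) = (a • v) ⊗ₜ[k] (r * s * y.unop)
        rw [mul_assoc])

/-- The space `X ⊗ R`, to be given its `R`-bimodule structure. -/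
def LeftComodAlg.Twist (_c : LeftComodAlg k A R) (X : Type u) [AddCommGroup X] [Module k X] :
    Type u := X ⊗[k] R

variable (c : LeftComodAlg k A R) (X : Type u) [AddCommGroup X] [Module k X]

instance : AddCommGroup (c.Twist X) := inferInstanceAs (AddCommGroup (X ⊗[k] R))

variable [Module A X] [IsScalarTower k A X]

noncomputable instance : Module (R ⊗[k] Rᵐᵒᵖ) (c.Twist X) :=
  Module.compHom (X ⊗[k] R) (c.twistAct X).toRingHom

variable {X}

/-- The pure tensor `v ⊗ r` in `X ⊗ R`. -/
def LeftComodAlg.Twist.mk (v : X) (r : R) : c.Twist X := v ⊗ₜ[k] r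

lemma LeftComodAlg.twistAct_tmul_tmul (x : R) (y : Rᵐᵒᵖ) (v : X) (r : R) :
    c.twistAct X (x ⊗ₜ[k] y) (v ⊗ₜ r) = tensorAct k A R X (c.lam x) (v ⊗ₜ (r * y.unop)) :=
  rfl

lemma LeftComodAlg.twistAct_one_tmul_tmul (y : Rᵐᵒᵖ) (v : X) (r : R) :
    c.twistAct X ((1 : R) ⊗ₜ[k] y) (v ⊗ₜ r) = v ⊗ₜ (r * y.unop) := by
  rw [twistAct_tmul_tmul, c.map_one, _root_.map_one, Module.End.one_apply]

lemma LeftComodAlg.twistAct_tmul_one (t : R ⊗[k] Rᵐᵒᵖ) (v : X) :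
    c.twistAct X t (v ⊗ₜ 1) = tensorAct k A R X (c.canEnv t) (v ⊗ₜ 1) := by
  induction t with
  | zero => simp
  | add a b ha hb => simp only [map_add, LinearMap.add_apply, ha, hb]
  | tmul x y =>
    rw [twistAct_tmul_tmul, canEnv_tmul, _root_.map_mul, Module.End.mul_apply, tensorAct_tmul, one_smul,
      one_mul, mul_one]

lemma LeftComodAlg.twistAct_transl_tmul_one (hc : c.IsGalois) (a : A) (v : X) :
    c.twistAct X (transl hc a) (v ⊗ₜ 1) = (a • v) ⊗ₜ 1 := by
  rw [twistAct_tmul_one, canEnv_transl, tensorAct_tmul, mul_one]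

variable {Y : Type u} [AddCommGroup Y] [Module k Y] [Module A Y] [IsScalarTower k A Y]

lemma rTensor_tensorAct (f : X →ₗ[A] Y) (z : A ⊗[k] R) (w : X ⊗[k] R) :
    (f.restrictScalars k).rTensor R (tensorAct k A R X z w) =
      tensorAct k A R Y z ((f.restrictScalars k).rTensor R w) := by
  induction z with
  | zero => simp
  | add a b ha hb => simp only [map_add, LinearMap.add_apply, ha, hb]
  | tmul a r =>
    induction w with
    | zero => simp
    | add a b ha hb => simp only [map_add, ha, hb]
    | tmul v s => simp

lemma LeftComodAlg.rTensor_twistAct (f : X →ₗ[A] Y) (t : R ⊗[k] Rᵐᵒᵖ) (w : X ⊗[k] R) :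
    (f.restrictScalars k).rTensor R (c.twistAct X t w) =
      c.twistAct Y t ((f.restrictScalars k).rTensor R w) := by
  induction t with
  | zero => simp
  | add a b ha hb => simp only [map_add, LinearMap.add_apply, ha, hb]
  | tmul x y =>
    induction w with
    | zero => simp
    | add a b ha hb => simp only [map_add, ha, hb]
    | tmul v r => exact rTensor_tensorAct f (c.lam x) (v ⊗ₜ (r * y.unop))

/-- Functoriality of `X ↦ X ⊗ R`. -/
noncomputable def LeftComodAlg.Twist.map (f : X →ₗ[A] Y) :
    c.Twist X →ₗ[R ⊗[k] Rᵐᵒᵖ] c.Twist Y where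
  toFun := (f.restrictScalars k).rTensor R
  map_add' := map_add _
  map_smul' := c.rTensor_twistAct f

lemma LeftComodAlg.Twist.hom_ext {M : Type u} [AddCommGroup M] [Module (R ⊗[k] Rᵐᵒᵖ) M]
    {f g : c.Twist X →ₗ[R ⊗[k] Rᵐᵒᵖ] M} (h : ∀ v, f (Twist.mk c v 1) = g (Twist.mk c v 1)) :
    f = g := by
  refine LinearMap.toAddMonoidHom_injective (AddMonoidHom.ext fun z => ?_)
  refine TensorProduct.induction_on (motive := fun z => f z = g z) z
    ((map_zero f).trans (map_zero g).symm) (fun v r => ?_) fun a b ha hb => ?_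
  · have : Twist.mk c v r = ((1 : R) ⊗ₜ[k] MulOpposite.op r) • Twist.mk c v 1 := by
      refine Eq.trans ?_ (c.twistAct_one_tmul_tmul (MulOpposite.op r) v 1).symm
      rw [one_mul]; rfl
    change f (Twist.mk c v r) = g (Twist.mk c v r)
    rw [this, map_smul, map_smul, h]
  · exact (map_add f (a : c.Twist X) b).trans
      ((congrArg₂ _ ha hb).trans (map_add g (a : c.Twist X) b).symm)

section Lift

variable {c} (hc : c.IsGalois) {M : Type u} [AddCommGroup M] [Module (R ⊗[k] Rᵐᵒᵖ) M]
  (g : X →+ M) (hg : ∀ (a : A) (v : X), g (a • v) = LeftComodAlg.transl hc a • g v)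

/-- The additive map underlying `LeftComodAlg.Twist.lift`. -/
noncomputable def LeftComodAlg.Twist.liftAdd : X ⊗[k] R →+ M :=
  TensorProduct.liftAddHom
    { toFun v := ((smulAddHom (R ⊗[k] Rᵐᵒᵖ) M).flip (g v)).comp
        ((TensorProduct.mk k R Rᵐᵒᵖ 1).toAddMonoidHom.comp
          (MulOpposite.opAddEquiv (α := R)).toAddMonoidHom)
      map_zero' := by ext; simp
      map_add' v w := by ext; simp }
    (fun a v r => by
      have h : g (a • v) = (algebraMap k (R ⊗[k] Rᵐᵒᵖ) a) • g v := by
        rw [← (transl hc).commutes a, ← hg, algebraMap_smul]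
      change ((1 : R) ⊗ₜ[k] MulOpposite.op r) • g (a • v) =
        ((1 : R) ⊗ₜ[k] MulOpposite.op (a • r)) • g v
      rw [h, ← mul_smul, ← Algebra.commutes, ← Algebra.smul_def, MulOpposite.op_smul,
        TensorProduct.tmul_smul])

lemma LeftComodAlg.Twist.liftAdd_tmul (v : X) (r : R) :
    liftAdd hc g hg (v ⊗ₜ r) = ((1 : R) ⊗ₜ[k] MulOpposite.op r) • g v := rfl

lemma LeftComodAlg.Twist.liftAdd_tensorAct (z : A ⊗[k] R) (v : X) (r : R) :
    liftAdd hc g hg (tensorAct k A R X z (v ⊗ₜ r)) =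
      (((1 : R) ⊗ₜ[k] MulOpposite.op r) * translMul hc z) • g v := by
  induction z with
  | zero =>
    simp only [map_zero, LinearMap.zero_apply, mul_zero]
    exact (zero_smul (R ⊗[k] Rᵐᵒᵖ) (g v)).symm
  | add a b ha hb => simp only [map_add, LinearMap.add_apply, mul_add, add_smul, ha, hb]
  | tmul a s =>
    rw [tensorAct_tmul, liftAdd_tmul, hg, translMul_tmul, ← mul_assoc, mul_smul,
      Algebra.TensorProduct.tmul_mul_tmul, one_mul, MulOpposite.op_mul]

lemma LeftComodAlg.Twist.liftAdd_twistAct (t : R ⊗[k] Rᵐᵒᵖ) (w : X ⊗[k] R) :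
    liftAdd hc g hg (c.twistAct X t w) = t • liftAdd hc g hg w := by
  induction t with
  | zero =>
    simp only [map_zero, LinearMap.zero_apply]
    exact (zero_smul (R ⊗[k] Rᵐᵒᵖ) (liftAdd hc g hg w)).symm
  | add a b ha hb => simp only [map_add, LinearMap.add_apply, add_smul, ha, hb]
  | tmul x y =>
    induction w with
    | zero => simp
    | add a b ha hb => simp only [map_add, smul_add, ha, hb]
    | tmul v r =>
      rw [twistAct_tmul_tmul, liftAdd_tensorAct, liftAdd_tmul, translMul_lam, ← mul_smul]
      simp

/-- The bimodule map `X ⊗ R → M` induced by an `A`-linear map from `X`. -/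
noncomputable def LeftComodAlg.Twist.lift : c.Twist X →ₗ[R ⊗[k] Rᵐᵒᵖ] M where
  toFun := liftAdd hc g hg
  map_add' := map_add _
  map_smul' := liftAdd_twistAct hc g hg

lemma LeftComodAlg.Twist.lift_mk_one (v : X) : lift hc g hg (Twist.mk c v 1) = g v :=
  one_smul _ _

end Lift

end TwistModule

section TwistFunctor

attribute [local instance] ModuleCat.moduleOfAlgebraModule
  ModuleCat.isScalarTower_of_algebra_moduleCat

variable {k A R : Type u} [Field k] [Ring A] [Bialgebra k A] [Ring R] [Algebra k R]

/-- The functor `X ↦ X ⊗ R` from `A`-modules to `R`-bimodules. -/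
noncomputable def LeftComodAlg.twistFunctor (c : LeftComodAlg k A R) :
    ModuleCat.{u} A ⥤ ModuleCat.{u} (R ⊗[k] Rᵐᵒᵖ) where
  obj X := ModuleCat.of _ (c.Twist X)
  map f := ModuleCat.ofHom (Twist.map c f.hom)
  map_id X := by
    ext z
    exact LinearMap.congr_fun (LinearMap.rTensor_id R X) z
  map_comp f g := by
    ext z
    exact LinearMap.congr_fun (LinearMap.rTensor_comp R (g.hom.restrictScalars k)
      (f.hom.restrictScalars k)) z

instance (c : LeftComodAlg k A R) : c.twistFunctor.Additive where
  map_add {X Y f g} := by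
    ext z
    exact LinearMap.congr_fun (LinearMap.rTensor_add R (f.hom.restrictScalars k)
      (g.hom.restrictScalars k)) z

instance (c : LeftComodAlg k A R) : c.twistFunctor.PreservesHomology :=
  Functor.preservesHomology_of_map_exact _ fun S hS => by
    rw [ShortComplex.ShortExact.moduleCat_exact_iff_function_exact] at hS ⊢
    exact Module.Flat.rTensor_exact (R := k) R (f := S.f.hom.restrictScalars k)
      (g := S.g.hom.restrictScalars k) hS

/-- The functor `X ↦ X ⊗ R` is left adjoint to restriction along the translation map. -/
noncomputable def LeftComodAlg.twistAdjunction {c : LeftComodAlg k A R} (hc : c.IsGalois) :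
    c.twistFunctor ⊣ ModuleCat.restrictScalars.{u} (transl hc).toRingHom :=
  Adjunction.mkOfHomEquiv
    { homEquiv X M :=
        { toFun f := ModuleCat.ofHom (Y := (ModuleCat.restrictScalars (transl hc).toRingHom).obj M)
            { toFun v := f.hom (Twist.mk c v 1)
              map_add' v w := by
                refine Eq.trans ?_ (map_add f.hom _ _)
                exact congrArg f.hom (TensorProduct.add_tmul v w 1)
              map_smul' a v := by
                refine Eq.trans ?_ (map_smul f.hom (transl hc a) (Twist.mk c v 1))
                exact congrArg f.hom (c.twistAct_transl_tmul_one hc a v).symm }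
          invFun g := ModuleCat.ofHom (Twist.lift hc g.hom.toAddMonoidHom fun a v =>
            g.hom.map_smul a v)
          left_inv f := by
            refine ModuleCat.hom_ext (Twist.hom_ext c fun v => ?_)
            exact Twist.lift_mk_one hc _ _ v
          right_inv g := by
            refine ModuleCat.hom_ext (LinearMap.ext fun v => ?_)
            exact Twist.lift_mk_one hc g.hom.toAddMonoidHom (fun a v => g.hom.map_smul a v) v }
      homEquiv_naturality_left_symm f g := by
        refine ModuleCat.hom_ext (Twist.hom_ext c fun v => ?_)
        refine (Twist.lift_mk_one hc _ _ v).trans ?_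
        exact (Twist.lift_mk_one hc g.hom.toAddMonoidHom (fun a v => g.hom.map_smul a v)
          (f.hom v)).symm
      homEquiv_naturality_right f g := rfl }

section Trivial

attribute [local instance] TensorProduct.Algebra.module

lemma LeftComodAlg.counit_lam (c : LeftComodAlg k A R) (x : R) :
    TensorProduct.lid k R (Coalgebra.counit.rTensor R (c.lam x)) = x :=
  LinearMap.congr_fun c.counit_comp x

lemma lid_rTensor_tensorAct {X : Type u} [AddCommGroup X] [Module k X] [Module A X]
    [IsScalarTower k A X] (e : X →ₗ[k] k)
    (he : ∀ (a : A) (v : X), e (a • v) = Coalgebra.counit (R := k) a * e v)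
    (z : A ⊗[k] R) (v : X) (s : R) :
    TensorProduct.lid k R (e.rTensor R (tensorAct k A R X z (v ⊗ₜ s))) =
      TensorProduct.lid k R (Coalgebra.counit.rTensor R z) * (e v • s) := by
  induction z with
  | zero => simp
  | add a b ha hb => simp only [map_add, LinearMap.add_apply, add_mul, ha, hb]
  | tmul a r => simp [he, mul_smul, smul_comm (e v)]

/-- Twisting the trivial module gives the regular bimodule `R`. -/
noncomputable def LeftComodAlg.twistTrivialEquiv (c : LeftComodAlg k A R) {X : Type u}
    [AddCommGroup X] [Module k X] [Module A X] [IsScalarTower k A X] (e : X ≃ₗ[k] k)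
    (he : ∀ (a : A) (v : X), e (a • v) = Coalgebra.counit (R := k) a * e v) :
    c.Twist X ≃ₗ[R ⊗[k] Rᵐᵒᵖ] R where
  toFun z := TensorProduct.lid k R (e.toLinearMap.rTensor R z)
  invFun r := (e.rTensor R).symm ((TensorProduct.lid k R).symm r)
  map_add' x y := by
    refine Eq.trans ?_ (map_add (TensorProduct.lid k R) _ _)
    exact congrArg _ (map_add (e.toLinearMap.rTensor R) _ _)
  map_smul' t w := by
    dsimp only [RingHom.id_apply]
    change TensorProduct.lid k R (e.toLinearMap.rTensor R (c.twistAct X t w)) = _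
    revert w
    change ∀ w : X ⊗[k] R, TensorProduct.lid k R (e.toLinearMap.rTensor R (c.twistAct X t w)) =
      t • TensorProduct.lid k R (e.toLinearMap.rTensor R w)
    intro w
    induction t with
    | zero =>
      simp only [map_zero, LinearMap.zero_apply]
      exact (zero_smul (R ⊗[k] Rᵐᵒᵖ) (TensorProduct.lid k R (e.toLinearMap.rTensor R w))).symm
    | add a b ha hb =>
      simp only [map_add, LinearMap.add_apply, ha, hb]
      exact (add_smul _ _ _).symm
    | tmul x y =>
      induction w with
      | zero => simp
      | add a b ha hb => simp only [map_add, ha, hb, smul_add]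
      | tmul v r =>
        rw [twistAct_tmul_tmul, lid_rTensor_tensorAct e.toLinearMap he, counit_lam,
          TensorProduct.Algebra.smul_def]
        simp
  left_inv z := by
    refine ((e.rTensor R).symm_apply_eq).2 ?_
    exact (TensorProduct.lid k R).symm_apply_apply _
  right_inv r := by
    refine ((TensorProduct.lid k R).eq_symm_apply).1 ?_
    exact (e.rTensor R).apply_symm_apply _

/-- Hochschild cohomology of a Galois object is cohomology of the trivial module. -/
lemma LeftComodAlg.subsingleton_ext_iff {c : LeftComodAlg k A R} (hc : c.IsGalois)
    (M : ModuleCat.{u} (R ⊗[k] Rᵐᵒᵖ)) (n : ℕ) :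
    Subsingleton (Abelian.Ext.{u} (ModuleCat.of (R ⊗[k] Rᵐᵒᵖ) R) M n) ↔
      Subsingleton (Abelian.Ext.{u} (ModuleCat.of A (TrivialModule k A))
        ((ModuleCat.restrictScalars.{u} (transl hc).toRingHom).obj M) n) := by
  rw [← subsingleton_ext_iff_of_adjunction (twistAdjunction hc)]
  let : Module k (TrivialModule k A) :=
    ModuleCat.moduleOfAlgebraModule (ModuleCat.of A (TrivialModule k A))
  have : IsScalarTower k A (TrivialModule k A) :=
    ModuleCat.isScalarTower_of_algebra_moduleCat (ModuleCat.of A (TrivialModule k A))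
  have hcounit (a v : k) : Coalgebra.counit (R := k) (algebraMap k A a) * v = a * v := by
    rw [Bialgebra.counit_algebraMap]
  let e : TrivialModule k A ≃ₗ[k] k := { AddEquiv.refl k with map_smul' := hcounit }
  let i : c.twistFunctor.obj (ModuleCat.of A (TrivialModule k A)) ≅
      ModuleCat.of (R ⊗[k] Rᵐᵒᵖ) R := (c.twistTrivialEquiv e fun _ _ => rfl).toModuleIso
  exact ⟨subsingleton_ext_of_retract i.retract (Retract.refl M),
    subsingleton_ext_of_retract i.symm.retract (Retract.refl M)⟩

end Trivial

end TwistFunctor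

section RegularGalois

variable {k A : Type u} [Field k] [Ring A] [HopfAlgebra k A]

/-- The map `a ⊗ y ↦ a₍₁₎ ⊗ f(a₍₂₎) y`. -/
noncomputable def shear (f : A →ₗ[k] A) : A ⊗[k] A →ₗ[k] A ⊗[k] A :=
  (LinearMap.mul' k A).lTensor A ∘ₗ (TensorProduct.assoc k A A A).toLinearMap ∘ₗ
    (f.lTensor A ∘ₗ Coalgebra.comul).rTensor A

lemma shear_tmul (f : A →ₗ[k] A) (a y : A) :
    shear f (a ⊗ₜ y) = f.lTensor A (Coalgebra.comul a) * (1 ⊗ₜ y) := by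
  simp only [shear, LinearMap.comp_apply, LinearMap.rTensor_tmul]
  induction Coalgebra.comul (R := k) a with
  | zero => simp
  | add a b ha hb => simp only [TensorProduct.add_tmul, map_add, ha, hb, add_mul]
  | tmul a r => simp

lemma shear_mul_one_tmul (f : A →ₗ[k] A) (z : A ⊗[k] A) (y : A) :
    shear f (z * (1 ⊗ₜ y)) = shear f z * (1 ⊗ₜ y) := by
  induction z with
  | zero => simp
  | add a b ha hb => simp only [map_add, ha, hb, add_mul]
  | tmul a r => simp [shear_tmul, mul_assoc]

lemma shear_lTensor (f g : A →ₗ[k] A) (z : A ⊗[k] A) :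
    shear f (g.lTensor A z) = (LinearMap.mul' k A ∘ₗ TensorProduct.map f g).lTensor A
      (TensorProduct.assoc k A A A (Coalgebra.comul.rTensor A z)) := by
  induction z with
  | zero => simp
  | add a b ha hb => simp only [map_add, ha, hb]
  | tmul a b =>
    rw [LinearMap.lTensor_tmul, shear_tmul, LinearMap.rTensor_tmul]
    induction Coalgebra.comul (R := k) a with
    | zero => simp
    | add a b ha hb => simp only [map_add, ha, hb, add_mul, TensorProduct.add_tmul]
    | tmul a r => simp

lemma shear_shear (f g : A →ₗ[k] A) (z : A ⊗[k] A) :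
    shear f (shear g z) = shear (LinearMap.mul' k A ∘ₗ TensorProduct.map f g ∘ₗ
      Coalgebra.comul) z := by
  induction z with
  | zero => simp
  | add a b ha hb => simp only [map_add, ha, hb]
  | tmul a y =>
    rw [shear_tmul, shear_mul_one_tmul, shear_lTensor, Coalgebra.coassoc_apply, shear_tmul,
      ← LinearMap.comp_apply, ← LinearMap.lTensor_comp, LinearMap.comp_assoc]

lemma shear_algebraMap_counit (z : A ⊗[k] A) :
    shear (Algebra.linearMap k A ∘ₗ Coalgebra.counit) z = z := by
  induction z with
  | zero => simp
  | add a b ha hb => simp only [map_add, ha, hb]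
  | tmul a y =>
    rw [shear_tmul, LinearMap.lTensor_comp, LinearMap.comp_apply, Coalgebra.lTensor_counit_comul]
    simp

lemma shear_bijective (f g : A →ₗ[k] A)
    (hfg : LinearMap.mul' k A ∘ₗ TensorProduct.map f g ∘ₗ Coalgebra.comul =
      Algebra.linearMap k A ∘ₗ Coalgebra.counit)
    (hgf : LinearMap.mul' k A ∘ₗ TensorProduct.map g f ∘ₗ Coalgebra.comul =
      Algebra.linearMap k A ∘ₗ Coalgebra.counit) :
    Function.Bijective (shear f) :=
  Function.bijective_iff_has_inverse.2 ⟨shear g,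
    fun z => by rw [shear_shear, hgf, shear_algebraMap_counit],
    fun z => by rw [shear_shear, hfg, shear_algebraMap_counit]⟩

variable (k A) in
/-- The regular left comodule algebra structure of `A` over itself. -/
noncomputable def regularComodAlg : LeftComodAlg k A A where
  lam := Coalgebra.comul
  coassoc := Coalgebra.coassoc
  counit_comp := by
    rw [Coalgebra.rTensor_counit_comp_comul]
    ext; simp
  map_one := Bialgebra.comul_one
  map_mul := Bialgebra.comul_mul

variable (k A) in
lemma regularComodAlg_isGalois : (regularComodAlg k A).IsGalois := by
  have : Nontrivial A := by
    refine ⟨0, 1, fun h => ?_⟩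
    have := congrArg (Coalgebra.counit (R := k)) h
    simp at this
  refine ⟨this, ?_⟩
  have h : (regularComodAlg k A).can = shear LinearMap.id := by
    rw [shear, LinearMap.lTensor_id, LinearMap.id_comp]
    rfl
  rw [h]
  refine shear_bijective _ (HopfAlgebra.antipode (R := k)) ?_ ?_
  · exact HopfAlgebra.mul_antipode_lTensor_comul
  · exact HopfAlgebra.mul_antipode_rTensor_comul

variable (k A) in
/-- The algebra map `A ⊗ Aᵐᵒᵖ → A`, `x ⊗ y ↦ ε(y)x`. -/
noncomputable def envCounit : A ⊗[k] Aᵐᵒᵖ →ₐ[k] A :=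
  Algebra.TensorProduct.lift (AlgHom.id k A)
    ((Algebra.ofId k A).comp ((AlgEquiv.toOpposite k k).symm.toAlgHom.comp
      (AlgHom.op (Bialgebra.counitAlgHom k A))))
    fun _ y => (Algebra.commutes (Coalgebra.counit (R := k) y.unop) _).symm

lemma envCounit_tmul (x : A) (y : Aᵐᵒᵖ) :
    envCounit k A (x ⊗ₜ y) = Coalgebra.counit (R := k) y.unop • x := by
  rw [Algebra.smul_def, Algebra.commutes]
  rfl

lemma rid_counit_canEnv (t : A ⊗[k] Aᵐᵒᵖ) :
    TensorProduct.rid k A (Coalgebra.counit.lTensor A ((regularComodAlg k A).canEnv t)) =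
      envCounit k A t := by
  induction t with
  | zero => simp
  | add a b ha hb => simp only [map_add, ha, hb]
  | tmul x y =>
    rw [LeftComodAlg.canEnv_tmul, envCounit_tmul]
    have h (z : A ⊗[k] A) : TensorProduct.rid k A (Coalgebra.counit.lTensor A
        (z * (1 ⊗ₜ y.unop))) = Coalgebra.counit (R := k) y.unop •
          TensorProduct.rid k A (Coalgebra.counit.lTensor A z) := by
      induction z with
      | zero => simp
      | add a b ha hb => simp only [add_mul, map_add, ha, hb, smul_add]
      | tmul a b => simp [mul_smul, smul_comm (Coalgebra.counit (R := k) b)]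
    rw [h]
    change _ • TensorProduct.rid k A (Coalgebra.counit.lTensor A (Coalgebra.comul x)) = _
    rw [Coalgebra.lTensor_counit_comul]
    simp

lemma envCounit_transl (a : A) :
    envCounit k A (LeftComodAlg.transl (regularComodAlg_isGalois k A) a) = a := by
  rw [← rid_counit_canEnv, LeftComodAlg.canEnv_transl]
  simp

end RegularGalois

section RestrictScalars

variable {S T : Type u} [Ring S] [Ring T]

/-- Restricting along `f` and then along a section of `f` does nothing. -/
noncomputable def restrictScalarsSectionIso (f : T →+* S) (g : S →+* T)
    (h : f.comp g = RingHom.id S) (M : ModuleCat.{u} S) :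
    (ModuleCat.restrictScalars.{u} g).obj ((ModuleCat.restrictScalars.{u} f).obj M) ≅ M :=
  (ModuleCat.restrictScalarsComp'App g f (RingHom.id S) h.symm M).symm ≪≫
    ModuleCat.restrictScalarsId'App (RingHom.id S) rfl M

/-- Restriction of scalars commutes with direct sums of copies of a module. -/
noncomputable def restrictScalarsFinsuppIso (f : T →+* S) (I : Type u) (M : ModuleCat.{u} S) :
    (ModuleCat.restrictScalars.{u} f).obj (ModuleCat.of S (I →₀ M)) ≅
      ModuleCat.of T (I →₀ (ModuleCat.restrictScalars.{u} f).obj M) :=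
  let e : ((ModuleCat.restrictScalars.{u} f).obj (ModuleCat.of S (I →₀ M))) ≃ₗ[T]
      (I →₀ (ModuleCat.restrictScalars.{u} f).obj M) :=
    { AddEquiv.refl (I →₀ M) with map_smul' := fun _ _ => rfl }
  e.toModuleIso

end RestrictScalars

section Smooth

variable {k A : Type u} [Field k] [Ring A] [HopfAlgebra k A]

attribute [local instance] TensorProduct.Algebra.module

lemma subsingleton_ext_regular_iff (M : ModuleCat.{u} A) (n : ℕ) :
    Subsingleton (Abelian.Ext.{u} (ModuleCat.of (A ⊗[k] Aᵐᵒᵖ) A)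
      ((ModuleCat.restrictScalars.{u} (envCounit k A).toRingHom).obj M) n) ↔
      Subsingleton (Abelian.Ext.{u} (ModuleCat.of A (TrivialModule k A)) M n) := by
  rw [LeftComodAlg.subsingleton_ext_iff (regularComodAlg_isGalois k A)]
  let i := restrictScalarsSectionIso (envCounit k A).toRingHom
    (LeftComodAlg.transl (regularComodAlg_isGalois k A)).toRingHom
    (RingHom.ext envCounit_transl) M
  exact ⟨subsingleton_ext_of_retract (Retract.refl _) i.symm.retract,
    subsingleton_ext_of_retract (Retract.refl _) i.retract⟩

lemma IsHomSmooth.exists_subsingleton_ext (h : IsHomSmooth k A) :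
    ∃ m, ∀ n, m < n → ∀ W : ModuleCat.{u} A,
      Subsingleton (Abelian.Ext.{u} (ModuleCat.of A (TrivialModule k A)) W n) := by
  obtain ⟨m, hm⟩ := h
  exact ⟨m, fun n hn W => (subsingleton_ext_regular_iff W n).1 (hm.subsingleton_ext hn _)⟩

/-- In the top degree, the cohomology of the trivial module of a smooth Hopf algebra is
detected by the regular module. -/
lemma IsHomSmooth.subsingleton_ext_of_regular (h : IsHomSmooth k A) {n : ℕ}
    (htop : ∀ V : ModuleCat.{u} A,
      Subsingleton (Abelian.Ext.{u} (ModuleCat.of A (TrivialModule k A)) V (n + 1)))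
    (hA : Subsingleton (Abelian.Ext.{u} (ModuleCat.of A (TrivialModule k A))
      (ModuleCat.of A A) n)) (W : ModuleCat.{u} A) :
    Subsingleton (Abelian.Ext.{u} (ModuleCat.of A (TrivialModule k A)) W n) := by
  obtain ⟨m, hm⟩ := h
  refine subsingleton_ext_of_surjective (W := W →₀ A) (W' := W) htop
    (p := Finsupp.linearCombination A id) (Finsupp.linearCombination_id_surjective A W) ?_
  rw [← subsingleton_ext_regular_iff] at hA ⊢
  have := hm.subsingleton_ext_finsupp W
    ((ModuleCat.restrictScalars.{u} (envCounit k A).toRingHom).obj (ModuleCat.of A A)) hA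
  let i := restrictScalarsFinsuppIso (envCounit k A).toRingHom W (ModuleCat.of A A)
  exact subsingleton_ext_of_retract (Retract.refl _) i.retract this

end Smooth

section RegularRetract

variable {k A R : Type u} [Field k] [Ring A] [HopfAlgebra k A] [Ring R] [Algebra k R]

/-- The coaction of `A` on the enveloping algebra of a left comodule algebra, through the
left factor. -/
noncomputable def LeftComodAlg.envCoact (c : LeftComodAlg k A R) :
    R ⊗[k] Rᵐᵒᵖ →ₐ[k] A ⊗[k] (R ⊗[k] Rᵐᵒᵖ) :=
  (Algebra.TensorProduct.assoc k k k A R Rᵐᵒᵖ).toAlgHom.comp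
    (Algebra.TensorProduct.map c.lamHom (AlgHom.id k Rᵐᵒᵖ))

lemma LeftComodAlg.envCoact_one (c : LeftComodAlg k A R) : c.envCoact 1 = 1 ⊗ₜ 1 :=
  c.envCoact.map_one

lemma LeftComodAlg.lTensor_canEnv_envCoact (c : LeftComodAlg k A R) (t : R ⊗[k] Rᵐᵒᵖ) :
    c.canEnv.lTensor A (c.envCoact t) =
      TensorProduct.assoc k A A R (Coalgebra.comul.rTensor R (c.canEnv t)) := by
  induction t with
  | zero => simp
  | add a b ha hb => simp only [map_add, ha, hb]
  | tmul x y =>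
    have h₁ (z : A ⊗[k] R) : c.canEnv.lTensor A (TensorProduct.assoc k A R Rᵐᵒᵖ (z ⊗ₜ y)) =
        c.lam.lTensor A z * (1 ⊗ₜ (1 ⊗ₜ y.unop)) := by
      induction z with
      | zero => simp
      | add a b ha hb => simp only [TensorProduct.add_tmul, map_add, ha, hb, add_mul]
      | tmul a r => simp [canEnv_tmul]
    have h₂ (z : A ⊗[k] R) : TensorProduct.assoc k A A R (Coalgebra.comul.rTensor R
        (z * (1 ⊗ₜ y.unop))) = TensorProduct.assoc k A A R (Coalgebra.comul.rTensor R z) *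
          (1 ⊗ₜ (1 ⊗ₜ y.unop)) := by
      induction z with
      | zero => simp
      | add a b ha hb => simp only [map_add, ha, hb, add_mul]
      | tmul a r =>
        rw [Algebra.TensorProduct.tmul_mul_tmul, mul_one, LinearMap.rTensor_tmul,
          LinearMap.rTensor_tmul]
        induction Coalgebra.comul (R := k) a with
        | zero => simp
        | add a b ha hb => simp only [TensorProduct.add_tmul, map_add, ha, hb, add_mul]
        | tmul a b => simp
    have hcoassoc : TensorProduct.assoc k A A R (Coalgebra.comul.rTensor R (c.lam x)) =
        c.lam.lTensor A (c.lam x) := LinearMap.congr_fun c.coassoc x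
    rw [canEnv_tmul, h₂, hcoassoc, ← h₁]
    rfl

variable {c : LeftComodAlg k A R} (hc : c.IsGalois)

lemma LeftComodAlg.envCoact_transl (a : A) :
    c.envCoact (transl hc a) = (transl hc).toLinearMap.lTensor A (Coalgebra.comul a) := by
  apply ((canEquiv hc).lTensor A).injective
  refine (c.lTensor_canEnv_envCoact _).trans ?_
  rw [canEnv_transl, LinearMap.rTensor_tmul]
  change _ = c.canEnv.lTensor A ((transl hc).toLinearMap.lTensor A (Coalgebra.comul a))
  induction Coalgebra.comul (R := k) a with
  | zero => simp
  | add a b ha hb => simp only [TensorProduct.add_tmul, map_add, ha, hb]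
  | tmul a b => simp [canEnv_transl]

/-- The map `a ⊗ s ↦ κ(S(a)) s`, where `κ` is the translation map. -/
noncomputable def LeftComodAlg.antipodeTranslMul :
    A ⊗[k] (R ⊗[k] Rᵐᵒᵖ) →ₗ[k] R ⊗[k] Rᵐᵒᵖ :=
  LinearMap.mul' k (R ⊗[k] Rᵐᵒᵖ) ∘ₗ
    ((transl hc).toLinearMap ∘ₗ HopfAlgebra.antipode k).rTensor (R ⊗[k] Rᵐᵒᵖ)

@[simp] lemma LeftComodAlg.antipodeTranslMul_tmul (a : A) (s : R ⊗[k] Rᵐᵒᵖ) :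
    antipodeTranslMul hc (a ⊗ₜ s) = transl hc (HopfAlgebra.antipode k a) * s := rfl

lemma LeftComodAlg.antipodeTranslMul_mul (a : A) (z : A ⊗[k] (R ⊗[k] Rᵐᵒᵖ)) :
    antipodeTranslMul hc ((transl hc).toLinearMap.lTensor A (Coalgebra.comul a) * z) =
      Coalgebra.counit (R := k) a • antipodeTranslMul hc z := by
  induction z with
  | zero => simp
  | add x y hx hy => simp only [mul_add, map_add, hx, hy, smul_add]
  | tmul b s =>
    have h (w : A ⊗[k] A) :
        antipodeTranslMul hc ((transl hc).toLinearMap.lTensor A w * (b ⊗ₜ s)) =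
          transl hc (HopfAlgebra.antipode k b) * (transl hc
            (LinearMap.mul' k A ((HopfAlgebra.antipode k).rTensor A w)) * s) := by
      induction w with
      | zero => simp
      | add x y hx hy => simp only [map_add, add_mul, mul_add, hx, hy]
      | tmul x y => simp [HopfAlgebra.antipode_mul_antidistrib, mul_assoc]
    rw [h, HopfAlgebra.mul_antipode_rTensor_comul_apply, antipodeTranslMul_tmul,
      AlgHom.commutes, Algebra.algebraMap_eq_smul_one, smul_mul_assoc, one_mul, mul_smul_comm]

lemma LeftComodAlg.exists_functional_transl :
    ∃ f : R ⊗[k] Rᵐᵒᵖ →ₗ[k] k, f 1 = 1 ∧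
      ∀ a t, f (transl hc a * t) = Coalgebra.counit (R := k) a * f t := by
  have := hc.1
  obtain ⟨φ, hφ⟩ := LinearMap.exists_leftInverse_of_injective
    (Algebra.linearMap k (R ⊗[k] Rᵐᵒᵖ))
    (LinearMap.ker_eq_bot.2 (FaithfulSMul.algebraMap_injective k (R ⊗[k] Rᵐᵒᵖ)))
  have hφ1 : φ 1 = 1 := by
    refine Eq.trans ?_ (LinearMap.congr_fun hφ 1)
    rw [LinearMap.comp_apply, Algebra.linearMap_apply, (algebraMap k _).map_one]
  refine ⟨φ ∘ₗ antipodeTranslMul hc ∘ₗ c.envCoact.toLinearMap, ?_, fun a t => ?_⟩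
  · simp only [LinearMap.comp_apply, AlgHom.toLinearMap_apply]
    rw [envCoact_one, antipodeTranslMul_tmul, HopfAlgebra.antipode_one, _root_.map_one, one_mul, hφ1]
  · simp only [LinearMap.comp_apply, AlgHom.toLinearMap_apply]
    rw [_root_.map_mul, envCoact_transl, antipodeTranslMul_mul, map_smul, smul_eq_mul]

/-- The translation map, viewed as an `A`-linear map, has an `A`-linear retraction. -/
lemma LeftComodAlg.exists_transl_retraction :
    ∃ ρ : R ⊗[k] Rᵐᵒᵖ →ₗ[k] A, ρ 1 = 1 ∧ ∀ a t, ρ (transl hc a * t) = a * ρ t := by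
  obtain ⟨f, hf1, hf⟩ := exists_functional_transl hc
  refine ⟨(TensorProduct.rid k A).toLinearMap ∘ₗ f.lTensor A ∘ₗ c.envCoact.toLinearMap,
    ?_, fun a t => ?_⟩
  · simp only [LinearMap.comp_apply, AlgHom.toLinearMap_apply]
    rw [envCoact_one, LinearMap.lTensor_tmul, hf1]
    simp
  · simp only [LinearMap.comp_apply, AlgHom.toLinearMap_apply, LinearEquiv.coe_coe]
    rw [_root_.map_mul, envCoact_transl]
    have h (w : A ⊗[k] A) (z : A ⊗[k] (R ⊗[k] Rᵐᵒᵖ)) : TensorProduct.rid k A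
        (f.lTensor A ((transl hc).toLinearMap.lTensor A w * z)) =
        TensorProduct.rid k A (Coalgebra.counit.lTensor A w) *
          TensorProduct.rid k A (f.lTensor A z) := by
      induction w with
      | zero => simp
      | add x y hx hy => simp only [map_add, add_mul, hx, hy]
      | tmul x y =>
        induction z with
        | zero => simp
        | add x y hx hy => simp only [map_add, mul_add, hx, hy]
        | tmul b s => simp [hf, mul_smul, smul_comm (f s)]
    rw [h, Coalgebra.lTensor_counit_comul]
    simp

/-- The regular `A`-module is a retract of the enveloping algebra of a Galois object. -/
noncomputable def LeftComodAlg.regularRetract : Retract (ModuleCat.of A A)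
    ((ModuleCat.restrictScalars.{u} (transl hc).toRingHom).obj
      (ModuleCat.of (R ⊗[k] Rᵐᵒᵖ) (R ⊗[k] Rᵐᵒᵖ))) :=
  let ρ := (exists_transl_retraction hc).choose
  have hρ := (exists_transl_retraction hc).choose_spec
  let G := (ModuleCat.restrictScalars.{u} (transl hc).toRingHom).obj
      (ModuleCat.of (R ⊗[k] Rᵐᵒᵖ) (R ⊗[k] Rᵐᵒᵖ))
  { i := ModuleCat.ofHom (Y := G)
      { toFun := transl hc, map_add' := map_add _, map_smul' := _root_.map_mul (transl hc) }
    r := ModuleCat.ofHom (X := G) { toFun := ρ, map_add' := map_add ρ, map_smul' := hρ.2 }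
    retract := by
      ext
      change ρ (transl hc 1) = 1
      rw [_root_.map_one]
      exact hρ.1 }

end RegularRetract

section ProjectiveDimension

variable {C D : Type (u + 1)} [Category.{u} C] [Abelian C] [EnoughProjectives C] [HasExt.{u} C]
  [Category.{u} D] [Abelian D] [EnoughProjectives D] [HasExt.{u} D]

lemma extPD_le_extPD {X : C} {Y : D}
    (h : ∀ n (W : C), ¬ Subsingleton (Abelian.Ext.{u} X W n) →
      ∃ m, n ≤ m ∧ ∃ V : D, ¬ Subsingleton (Abelian.Ext.{u} Y V m)) : extPD X ≤ extPD Y := by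
  refine sSup_le ?_
  rintro _ ⟨n, rfl, W, hW⟩
  obtain ⟨m, hm, V, hV⟩ := h n W ((nontrivial_ext_functor_iff X W n).1 hW)
  exact (Nat.cast_le.2 hm).trans
    (le_sSup ⟨m, rfl, V, (nontrivial_ext_functor_iff Y V m).2 hV⟩)

lemma extPD_eq_of_iso {X Y : C} (e : X ≅ Y) : extPD X = extPD Y :=
  le_antisymm
    (extPD_le_extPD fun n W hW => ⟨n, le_rfl, W, fun h =>
      hW (subsingleton_ext_of_retract e.retract (Retract.refl W) h)⟩)
    (extPD_le_extPD fun n W hW => ⟨n, le_rfl, W, fun h =>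
      hW (subsingleton_ext_of_retract e.symm.retract (Retract.refl W) h)⟩)

lemma extPD_equivalence_functor_obj_le (E : C ≌ D) [E.functor.Additive] (X : C) :
    extPD (E.functor.obj X) ≤ extPD X :=
  extPD_le_extPD fun n W hW => ⟨n, le_rfl, E.inverse.obj W, fun h =>
    hW ((subsingleton_ext_iff_of_adjunction E.toAdjunction X W n).2 h)⟩

lemma extPD_equivalence_functor_obj (E : C ≌ D) [E.functor.Additive] (X : C) :
    extPD (E.functor.obj X) = extPD X := by
  refine le_antisymm (extPD_equivalence_functor_obj_le E X) ?_
  have : E.symm.functor.Additive := E.inverse_additive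
  exact (extPD_eq_of_iso (E.unitIso.app X)).le.trans
    (extPD_equivalence_functor_obj_le E.symm (E.functor.obj X))

end ProjectiveDimension

section LeftGalois

variable {k A R : Type u} [Field k] [Ring A] [HopfAlgebra k A] [Ring R] [Algebra k R]

attribute [local instance] TensorProduct.Algebra.module

/-- If some cohomology group of the trivial module of a smooth Hopf algebra is nonzero in
degree `n`, then its cohomology with regular coefficients is nonzero in some degree `≥ n`. -/
lemma IsHomSmooth.exists_le_not_subsingleton_ext_regular (h : IsHomSmooth k A) {n : ℕ}
    {W : ModuleCat.{u} A}
    (hW : ¬ Subsingleton (Abelian.Ext.{u} (ModuleCat.of A (TrivialModule k A)) W n)) :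
    ∃ m, n ≤ m ∧ ¬ Subsingleton (Abelian.Ext.{u} (ModuleCat.of A (TrivialModule k A))
      (ModuleCat.of A A) m) := by
  let s : Set ℕ := {m | ∃ V : ModuleCat.{u} A,
    ¬ Subsingleton (Abelian.Ext.{u} (ModuleCat.of A (TrivialModule k A)) V m)}
  obtain ⟨N, hN⟩ := h.exists_subsingleton_ext
  have hs : BddAbove s := ⟨N, fun m ⟨V, hV⟩ => not_lt.1 fun hm => hV (hN m hm V)⟩
  have hn : n ∈ s := ⟨W, hW⟩
  refine ⟨sSup s, le_csSup hs hn, fun hA => ?_⟩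
  obtain ⟨V, hV⟩ := Nat.sSup_mem ⟨n, hn⟩ hs
  refine hV (h.subsingleton_ext_of_regular (fun V' => ?_) hA V)
  by_contra hV'
  exact (Nat.lt_succ_self (sSup s)).not_ge (le_csSup hs ⟨V', hV'⟩)

lemma LeftComodAlg.IsGalois.cdHopf_eq_cdAlg {c : LeftComodAlg k A R} (hc : c.IsGalois)
    (h : IsHomSmooth k A) : cdHopf k A = cdAlg k R := by
  refine le_antisymm (extPD_le_extPD fun n W hW => ?_) (extPD_le_extPD fun n W hW => ?_)
  · obtain ⟨m, hm, hA⟩ := h.exists_le_not_subsingleton_ext_regular hW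
    refine ⟨m, hm, ModuleCat.of (R ⊗[k] Rᵐᵒᵖ) (R ⊗[k] Rᵐᵒᵖ), fun hS => hA ?_⟩
    exact subsingleton_ext_of_retract (Retract.refl _) (regularRetract hc)
      ((LeftComodAlg.subsingleton_ext_iff hc _ _).1 hS)
  · exact ⟨n, le_rfl, _, fun hA => hW ((LeftComodAlg.subsingleton_ext_iff hc W n).2 hA)⟩

end LeftGalois

section Opposite

variable (k R : Type u) [Field k] [Ring R] [Algebra k R]

attribute [local instance] TensorProduct.Algebra.module

/-- The enveloping algebras of an algebra and of its opposite are isomorphic. -/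
noncomputable def envOpEquiv : R ⊗[k] Rᵐᵒᵖ ≃ₐ[k] Rᵐᵒᵖ ⊗[k] Rᵐᵒᵖᵐᵒᵖ :=
  (Algebra.TensorProduct.comm k R Rᵐᵒᵖ).trans
    (Algebra.TensorProduct.congr AlgEquiv.refl (AlgEquiv.opOp k R))

lemma unop_envOpEquiv_smul (t : R ⊗[k] Rᵐᵒᵖ) (r : Rᵐᵒᵖ) :
    MulOpposite.unop (envOpEquiv k R t • r) = t • MulOpposite.unop r := by
  induction t with
  | zero =>
    rw [map_zero]
    exact (congrArg MulOpposite.unop (zero_smul (Rᵐᵒᵖ ⊗[k] Rᵐᵒᵖᵐᵒᵖ) r)).trans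
      (zero_smul (R ⊗[k] Rᵐᵒᵖ) r.unop).symm
  | add a b ha hb => rw [map_add, add_smul, add_smul, MulOpposite.unop_add, ha, hb]
  | tmul x y => exact mul_assoc x r.unop y.unop

lemma cdAlg_mulOpposite : cdAlg k Rᵐᵒᵖ = cdAlg k R := by
  let E := ModuleCat.restrictScalarsEquivalenceOfRingEquiv.{u} (envOpEquiv k R).toRingEquiv
  have : E.functor.Additive :=
    inferInstanceAs (ModuleCat.restrictScalars.{u} (envOpEquiv k R).toRingEquiv.toRingHom).Additive
  let e : (E.functor.obj (ModuleCat.of (Rᵐᵒᵖ ⊗[k] Rᵐᵒᵖᵐᵒᵖ) Rᵐᵒᵖ)) ≃ₗ[R ⊗[k] Rᵐᵒᵖ] R :=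
    { (MulOpposite.opAddEquiv (α := R)).symm with map_smul' := unop_envOpEquiv_smul k R }
  exact (extPD_equivalence_functor_obj E _).symm.trans
    (extPD_eq_of_iso (Y := ModuleCat.of (R ⊗[k] Rᵐᵒᵖ) R) e.toModuleIso)

end Opposite

section AntipodeComul

open HopfAlgebra WithConv

variable (k A : Type u) [Field k] [Ring A] [HopfAlgebra k A]

lemma comul_comp_antipode :
    (Coalgebra.comul ∘ₗ antipode k : A →ₗ[k] A ⊗[k] A) =
      TensorProduct.map (antipode k) (antipode k) ∘ₗ
        (TensorProduct.comm k A A).toLinearMap ∘ₗ Coalgebra.comul := by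
  let i₁ : A →ₐ[k] A ⊗[k] A := Algebra.TensorProduct.includeLeft
  let i₂ : A →ₐ[k] A ⊗[k] A := Algebra.TensorProduct.includeRight
  have hΔ : toConv (Coalgebra.comul (R := k) (A := A)) =
      toConv i₁.toLinearMap * toConv i₂.toLinearMap := by
    ext a
    rw [LinearMap.convMul_apply]
    induction Coalgebra.comul (R := k) a with
    | zero => simp
    | add a b ha hb => rw [map_add, map_add, ← ha, ← hb]
    | tmul x y => simp [i₁, i₂]
  have hG : toConv (TensorProduct.map (antipode k) (antipode k) ∘ₗ
      (TensorProduct.comm k A A).toLinearMap ∘ₗ Coalgebra.comul) =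
      toConv (i₂.toLinearMap ∘ₗ antipode k) * toConv (i₁.toLinearMap ∘ₗ antipode k) := by
    ext a
    rw [LinearMap.convMul_apply]
    change TensorProduct.map (antipode k) (antipode k)
      (TensorProduct.comm k A A (Coalgebra.comul a)) = _
    induction Coalgebra.comul (R := k) a with
    | zero => simp
    | add a b ha hb => rw [map_add, map_add, map_add, map_add, ← ha, ← hb]
    | tmul x y => simp [i₁, i₂]
  have hS (i : A →ₐ[k] A ⊗[k] A) :
      toConv (i.toLinearMap ∘ₗ antipode k) * toConv i.toLinearMap = 1 := by
    have := LinearMap.algHom_comp_convMul_distrib i (toConv (antipode k)) (toConv LinearMap.id)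
    rw [LinearMap.antipode_mul_id] at this
    apply ofConv_injective
    refine this.symm.trans ?_
    ext a
    exact i.commutes _
  refine toConv_injective (left_inv_eq_right_inv ?_ LinearMap.comul_right_inv).symm
  rw [hG, hΔ, mul_assoc, ← mul_assoc _ (toConv i₁.toLinearMap), hS i₁, one_mul, hS i₂]

end AntipodeComul

section RightGalois

open MulOpposite HopfAlgebra

variable {k A R : Type u} [Field k] [Ring A] [HopfAlgebra k A] [Ring R] [Algebra k R]

variable (k A R) in
/-- The map `r ⊗ a ↦ S(a) ⊗ r`, from `R ⊗ A` to `A ⊗ Rᵐᵒᵖ`. -/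
noncomputable def antipodeFlip : R ⊗[k] A →ₗ[k] A ⊗[k] Rᵐᵒᵖ :=
  TensorProduct.map (antipode k) (opLinearEquiv k).toLinearMap ∘ₗ
    (TensorProduct.comm k R A).toLinearMap

@[simp] lemma antipodeFlip_tmul (r : R) (a : A) :
    antipodeFlip k A R (r ⊗ₜ a) = antipode k a ⊗ₜ op r := rfl

lemma antipodeFlip_mul (z w : R ⊗[k] A) :
    antipodeFlip k A R (z * w) = antipodeFlip k A R w * antipodeFlip k A R z := by
  induction z with
  | zero => simp
  | add a b ha hb => simp only [add_mul, mul_add, map_add, ha, hb]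
  | tmul r a =>
    induction w with
    | zero => simp
    | add a b ha hb => simp only [add_mul, mul_add, map_add, ha, hb]
    | tmul s b => simp [antipode_mul_antidistrib]

lemma antipodeFlip_bijective (h : Function.Bijective (antipode k (A := A))) :
    Function.Bijective (antipodeFlip k A R) :=
  ((TensorProduct.comm k R A).trans (TensorProduct.congr (LinearEquiv.ofBijective _ h)
    (opLinearEquiv k))).bijective

lemma lid_counit_antipodeFlip (z : R ⊗[k] A) :
    TensorProduct.lid k Rᵐᵒᵖ (Coalgebra.counit.rTensor Rᵐᵒᵖ (antipodeFlip k A R z)) =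
      op (TensorProduct.rid k R (Coalgebra.counit.lTensor R z)) := by
  induction z with
  | zero => simp
  | add a b ha hb => simp only [map_add, ha, hb, MulOpposite.op_add]
  | tmul r a => simp

/-- The left comodule algebra structure on the opposite of a right comodule algebra,
`x ↦ S(x₍₁₎) ⊗ x₍₀₎`. -/
noncomputable def RightComodAlg.opLeft (c : RightComodAlg k A R) : LeftComodAlg k A Rᵐᵒᵖ where
  lam := antipodeFlip k A R ∘ₗ c.ρ ∘ₗ (opLinearEquiv k).symm.toLinearMap
  coassoc := by
    let Θ : R ⊗[k] (A ⊗[k] A) →ₗ[k] A ⊗[k] (A ⊗[k] Rᵐᵒᵖ) :=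
      (antipodeFlip k A R).lTensor A ∘ₗ (TensorProduct.assoc k A R A).toLinearMap ∘ₗ
        ((antipode k).rTensor R ∘ₗ (TensorProduct.comm k R A).toLinearMap).rTensor A ∘ₗ
          (TensorProduct.assoc k R A A).symm.toLinearMap ∘ₗ
            (TensorProduct.comm k A A).toLinearMap.lTensor R
    have h₁ (z : R ⊗[k] A) : TensorProduct.assoc k A A Rᵐᵒᵖ
        (Coalgebra.comul.rTensor Rᵐᵒᵖ (antipodeFlip k A R z)) =
          Θ (Coalgebra.comul.lTensor R z) := by
      induction z with
      | zero => simp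
      | add a b ha hb => simp only [map_add, ha, hb]
      | tmul r a =>
        rw [antipodeFlip_tmul, LinearMap.rTensor_tmul, LinearMap.lTensor_tmul,
          ← LinearMap.comp_apply, comul_comp_antipode, LinearMap.comp_apply, LinearMap.comp_apply]
        induction Coalgebra.comul (R := k) a with
        | zero => simp
        | add a b ha hb =>
          simp only [TensorProduct.add_tmul, TensorProduct.tmul_add, map_add, ha, hb]
        | tmul a b => rfl
    have h₂ (z : R ⊗[k] A) :
        (antipodeFlip k A R ∘ₗ c.ρ ∘ₗ (opLinearEquiv k).symm.toLinearMap).lTensor A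
          (antipodeFlip k A R z) = Θ (TensorProduct.assoc k R A A (c.ρ.rTensor A z)) := by
      induction z with
      | zero => simp
      | add a b ha hb => simp only [map_add, ha, hb]
      | tmul r a =>
        rw [antipodeFlip_tmul, LinearMap.rTensor_tmul, LinearMap.lTensor_tmul]
        change _ ⊗ₜ antipodeFlip k A R (c.ρ r) = _
        induction c.ρ r with
        | zero => simp
        | add a b ha hb =>
          simp only [TensorProduct.add_tmul, TensorProduct.tmul_add, map_add, ha, hb]
        | tmul a b => rfl
    refine LinearMap.ext fun x => ?_
    refine (h₁ (c.ρ x.unop)).trans (Eq.trans ?_ (h₂ (c.ρ x.unop)).symm)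
    exact congrArg Θ (LinearMap.congr_fun c.coassoc x.unop).symm
  counit_comp := by
    refine LinearMap.ext fun x => ?_
    refine (lid_counit_antipodeFlip (c.ρ x.unop)).trans ?_
    exact congrArg op (LinearMap.congr_fun c.counit_comp x.unop)
  map_one := by
    change antipodeFlip k A R (c.ρ 1) = 1
    rw [c.map_one, Algebra.TensorProduct.one_def, antipodeFlip_tmul, antipode_one]
    rfl
  map_mul x y := by
    change antipodeFlip k A R (c.ρ (y.unop * x.unop)) = _
    rw [c.map_mul, antipodeFlip_mul]
    rfl

lemma RightComodAlg.can_tmul (c : RightComodAlg k A R) (x y : R) :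
    c.can (x ⊗ₜ y) = (x ⊗ₜ 1) * c.ρ y := by
  simp only [RightComodAlg.can, LinearMap.comp_apply, LinearMap.lTensor_tmul]
  induction c.ρ y with
  | zero => simp
  | add a b ha hb => simp only [TensorProduct.tmul_add, map_add, ha, hb, mul_add]
  | tmul r a => simp

lemma RightComodAlg.opLeft_can (c : RightComodAlg k A R) (z : R ⊗[k] R) :
    c.opLeft.can (TensorProduct.map (opLinearEquiv k).toLinearMap (opLinearEquiv k).toLinearMap
      (TensorProduct.comm k R R z)) = antipodeFlip k A R (c.can z) := by
  induction z with
  | zero => simp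
  | add a b ha hb => simp only [map_add, ha, hb]
  | tmul x y =>
    rw [RightComodAlg.can_tmul, antipodeFlip_mul, antipodeFlip_tmul, antipode_one]
    exact c.opLeft.can_tmul (op y) (op x)

lemma RightComodAlg.IsGalois.opLeft {c : RightComodAlg k A R} (hc : c.IsGalois)
    (h : Function.Bijective (antipode k (A := A))) : c.opLeft.IsGalois := by
  have := hc.1
  refine ⟨inferInstance, ?_⟩
  let e := (TensorProduct.comm k R R).trans
    (TensorProduct.congr (opLinearEquiv k (M := R)) (opLinearEquiv k (M := R)))
  refine (Function.Bijective.of_comp_iff c.opLeft.can e.bijective).1 ?_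
  have he : c.opLeft.can ∘ e = antipodeFlip k A R ∘ c.can := funext c.opLeft_can
  rw [he]
  exact (antipodeFlip_bijective h).comp hc.2

end RightGalois

end QuesProj

open QuesProj

/-- Let `A` be a Hopf algebra over an algebraically closed field `k` with
bijective antipode, and let `R` be a left or right `A`-Galois object. If `A` is
homologically smooth, then `cd(A) = cd(R)`. -/
theorem cd_eq_cd_galois_of_smooth (k A R : Type u) [Field k] [IsAlgClosed k]
    [Ring A] [HopfAlgebra k A] [Ring R] [Algebra k R]
    (hantipode : Function.Bijective (HopfAlgebra.antipode (R := k) (A := A)))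
    (hGalois : IsGaloisObject k A R)
    (hsmooth : IsHomSmooth k A) :
    cdHopf k A = cdAlg k R := by
  obtain ⟨c, hc⟩ | ⟨c, hc⟩ := hGalois
  · exact hc.cdHopf_eq_cdAlg hsmooth
  · exact ((hc.opLeft hantipode).cdHopf_eq_cdAlg hsmooth).trans (cdAlg_mulOpposite k R)
end

section
/- Let A be a Hopf algebra over an algebraically closed field k and let R be a left or right A-Galois object. If A is cosemisimple and cd(A) is finite, then cd(A) = cd(R). -/
open TensorProduct CategoryTheory

universe u

namespace QuesProj

section Bimodule

attribute [local instance] TensorProduct.Algebra.module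

variable (k : Type u) [Field k] (R : Type u) [Ring R] [Algebra k R]

attribute [local instance] envTower

end Bimodule


end QuesProj

open QuesProj

section Bridge

open Limits

variable {C : Type (u + 1)} [Category.{u} C] [Abelian C] [EnoughProjectives C]

lemma subsingleton_oldExt_succ_iff (V W : C) (m : ℕ) [HasExt.{u + 1} C] :
    Subsingleton (((Ext ℤ C (m + 1)).obj (Opposite.op V)).obj W) ↔
      Subsingleton (Abelian.Ext V W (m + 1)) := by
  have P : ProjectiveResolution V := ProjectiveResolution.of V
  have h1 : Subsingleton (((Ext ℤ C (m + 1)).obj (Opposite.op V)).obj W) ↔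
      ∀ f : P.complex.X (m + 1) ⟶ W, P.complex.d (m + 2) (m + 1) ≫ f = 0 →
        ∃ g, P.complex.d (m + 1) m ≫ g = f := by
    rw [← ModuleCat.isZero_iff_subsingleton, (P.isoExt (R := ℤ) (m + 1) W).isZero_iff,
      ← HomologicalComplex.exactAt_iff_isZero_homology,
      HomologicalComplex.exactAt_iff' _ m (m + 1) (m + 2) (by simp) (by simp),
      ShortComplex.moduleCat_exact_iff]
    rfl
  rw [h1]
  constructor
  · intro h
    refine subsingleton_of_forall_eq 0 fun α => ?_
    obtain ⟨f, hf, rfl⟩ := P.extMk_surjective α (m + 2) rfl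
    exact (P.extMk_eq_zero_iff f (m + 2) rfl hf m rfl).2 (h f hf)
  · intro h f hf
    exact (P.extMk_eq_zero_iff f (m + 2) rfl hf m rfl).1 (Subsingleton.elim _ _)

lemma extPD_le_iff (V : C) (n : ℕ) :
    extPD V ≤ n ↔ HasProjectiveDimensionLT V (n + 1) := by
  let := HasExt.standard.{u} C
  rw [extPD, sSup_le_iff, hasProjectiveDimensionLT_iff]
  constructor
  · rintro h (_ | m) hm W α
    · omega
    · have : Subsingleton (Abelian.Ext V W (m + 1)) := by
        rw [← subsingleton_oldExt_succ_iff, ← not_nontrivial_iff_subsingleton]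
        intro hW
        have := h _ ⟨m + 1, rfl, W, hW⟩
        norm_cast at this
        omega
      exact Subsingleton.elim _ _
  · rintro h _ ⟨m, rfl, W, hW⟩
    rw [Nat.cast_le]
    by_contra! hm
    obtain ⟨m, rfl⟩ : ∃ m', m = m' + 1 := ⟨m - 1, by omega⟩
    rw [← not_subsingleton_iff_nontrivial, subsingleton_oldExt_succ_iff] at hW
    exact hW (subsingleton_of_forall_eq 0 fun α => h _ hm α)

end Bridge

section ProjectiveDimension

variable {S : Type u} [Ring S]

lemma hasProjectiveDimensionLT_one_iff (V : Type u) [AddCommGroup V] [Module S V] :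
    HasProjectiveDimensionLT (ModuleCat.of S V) 1 ↔ Module.Projective S V := by
  rw [← projective_iff_hasProjectiveDimensionLT_one, IsProjective.iff_projective]

lemma hasProjectiveDimensionLT_syzygy_iff {K P V : Type u} [AddCommGroup K] [Module S K]
    [AddCommGroup P] [Module S P] [AddCommGroup V] [Module S V] {φ : K →ₗ[S] P} {π : P →ₗ[S] V}
    (hφ : Function.Injective φ) (hπ : Function.Surjective π) (hex : Function.Exact φ π)
    (hP : Module.Projective S P) (n : ℕ) :
    HasProjectiveDimensionLT (ModuleCat.of S V) (n + 2) ↔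
      HasProjectiveDimensionLT (ModuleCat.of S K) (n + 1) := by
  let T : ShortComplex (ModuleCat.{u} S) := ShortComplex.mk (ModuleCat.ofHom φ) (ModuleCat.ofHom π)
    (by rw [← ModuleCat.ofHom_comp, hex.linearMap_comp_eq_zero]; rfl)
  have hT : T.ShortExact :=
    { exact := (ShortComplex.ShortExact.moduleCat_exact_iff_function_exact T).2 hex
      mono_f := (ModuleCat.mono_iff_injective _).2 hφ
      epi_g := (ModuleCat.epi_iff_surjective _).2 hπ }
  exact hT.hasProjectiveDimensionLT_X₃_iff n ((IsProjective.iff_projective P).1 hP)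

/-- The canonical presentation of a module by a free module. -/
noncomputable abbrev freeCover (S V : Type u) [Ring S] [AddCommGroup V] [Module S V] :
    (V →₀ S) →ₗ[S] V :=
  Finsupp.linearCombination S id

lemma freeCover_surjective (V : Type u) [AddCommGroup V] [Module S V] :
    Function.Surjective (freeCover S V) :=
  Finsupp.linearCombination_id_surjective S V

lemma hasProjectiveDimensionLT_ker_freeCover_iff (V : Type u) [AddCommGroup V] [Module S V]
    (n : ℕ) : HasProjectiveDimensionLT (ModuleCat.of S V) (n + 2) ↔
      HasProjectiveDimensionLT (ModuleCat.of S (LinearMap.ker (freeCover S V))) (n + 1) :=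
  hasProjectiveDimensionLT_syzygy_iff (LinearMap.ker (freeCover S V)).injective_subtype
    (freeCover_surjective V) (LinearMap.exact_subtype_ker_map _) inferInstance n

end ProjectiveDimension

/-- A Hopf-algebra-like structure on `B`, coacting on the algebra `E` with coinvariants
detected by a vector `r` of an `E`-module `R`. -/
structure GaloisDatum (k B E R : Type u) [Field k] [Ring B] [Algebra k B] [Ring E] [Algebra k E]
    [AddCommGroup R] [Module k R] [Module E R] [IsScalarTower k E R] where
  /-- the comultiplication of `B` -/
  Δ : B →ₗ[k] B ⊗[k] B
  /-- the counit of `B` -/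
  ε : B →ₐ[k] k
  /-- the antipode of `B` -/
  S : B →ₗ[k] B
  comul_coassoc : (TensorProduct.assoc k B B B).toLinearMap ∘ₗ Δ.rTensor B ∘ₗ Δ
    = Δ.lTensor B ∘ₗ Δ
  comul_counit : (TensorProduct.rid k B).toLinearMap ∘ₗ ε.toLinearMap.lTensor B ∘ₗ Δ
    = LinearMap.id
  antipode_left : LinearMap.mul' k B ∘ₗ S.rTensor B ∘ₗ Δ
    = Algebra.linearMap k B ∘ₗ ε.toLinearMap
  antipode_right : LinearMap.mul' k B ∘ₗ S.lTensor B ∘ₗ Δ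
    = Algebra.linearMap k B ∘ₗ ε.toLinearMap
  /-- the coaction of `B` on `E` -/
  δ : E →ₐ[k] B ⊗[k] E
  coact_coassoc : (TensorProduct.assoc k B B E).toLinearMap ∘ₗ Δ.rTensor E ∘ₗ δ.toLinearMap
    = δ.toLinearMap.lTensor B ∘ₗ δ.toLinearMap
  coact_counit : (TensorProduct.lid k E).toLinearMap ∘ₗ ε.toLinearMap.rTensor E ∘ₗ δ.toLinearMap
    = LinearMap.id
  /-- the distinguished vector of `R` -/
  r : R
  r_ne_zero : r ≠ 0
  bijective : Function.Bijective (((LinearMap.toSpanSingleton E R r).restrictScalars k).lTensor B ∘ₗ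
    δ.toLinearMap)

namespace GaloisDatum

section Induced

variable {k B E R : Type u} [Field k] [Ring B] [Algebra k B] [Ring E] [Algebra k E]
    [AddCommGroup R] [Module k R] [Module E R] [IsScalarTower k E R]
    (D : GaloisDatum k B E R)
variable (V W : Type u) [AddCommGroup V] [Module k V] [Module B V] [IsScalarTower k B V]
  [AddCommGroup W] [Module k W] [Module B W] [IsScalarTower k B W]

/-- The action of `B ⊗ E` on `V ⊗ R`. -/
noncomputable def tensorAct (k B E R V : Type u) [Field k] [Ring B] [Algebra k B] [Ring E]
    [Algebra k E] [AddCommGroup R] [Module k R] [Module E R] [IsScalarTower k E R]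
    [AddCommGroup V] [Module k V] [Module B V] [IsScalarTower k B V] :
    B ⊗[k] E →ₐ[k] Module.End k (V ⊗[k] R) :=
  (Module.endTensorEndAlgHom (R := k) (A := k) (M := V) (N := R)).comp
    (Algebra.TensorProduct.map (Algebra.lsmul k k V) (Algebra.lsmul k k R))

@[simp]
lemma tensorAct_tmul (b : B) (e : E) (v : V) (y : R) :
    tensorAct k B E R V (b ⊗ₜ e) (v ⊗ₜ y) = (b • v) ⊗ₜ (e • y) := rfl

variable {V W} in
lemma tensorAct_rTensor (φ : V →ₗ[B] W) (t : B ⊗[k] E) (x : V ⊗[k] R) :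
    tensorAct k B E R W t ((φ.restrictScalars k).rTensor R x)
      = (φ.restrictScalars k).rTensor R (tensorAct k B E R V t x) := by
  induction t with
  | zero => simp
  | add t t' h h' => simp only [map_add, LinearMap.add_apply, h, h']
  | tmul b e =>
    induction x with
    | zero => simp
    | add x x' h h' => simp only [map_add, h, h']
    | tmul v y => simp

/-- The `E`-module induced from a `B`-module `V`: the space `V ⊗ R`, with `E` acting through
the coaction `E → B ⊗ E`. -/
def Ind (_D : GaloisDatum k B E R) (V : Type u) [AddCommGroup V] [Module k V] : Type u :=
  V ⊗[k] R

instance : AddCommGroup (D.Ind V) := inferInstanceAs (AddCommGroup (V ⊗[k] R))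

instance : Module k (D.Ind V) := inferInstanceAs (Module k (V ⊗[k] R))

noncomputable instance : Module E (D.Ind V) :=
  Module.compHom (V ⊗[k] R) ((tensorAct k B E R V).comp D.δ).toRingHom

lemma ind_smul_def (e : E) (x : D.Ind V) : e • x = tensorAct k B E R V (D.δ e) x := rfl

instance : IsScalarTower k E (D.Ind V) where
  smul_assoc c e x := by
    rw [ind_smul_def, ind_smul_def, map_smul, map_smul]
    rfl

/-- The pure tensors of an induced module. -/
def pure {V : Type u} [AddCommGroup V] [Module k V] (v : V) (y : R) : D.Ind V :=
  (v ⊗ₜ[k] y : V ⊗[k] R)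

variable {V W}

/-- Functoriality of the induced module. -/
noncomputable def map (φ : V →ₗ[B] W) : D.Ind V →ₗ[E] D.Ind W where
  toFun x := (φ.restrictScalars k).rTensor R x
  map_add' _ _ := _root_.map_add _ _ _
  map_smul' _ _ := (tensorAct_rTensor φ _ _).symm

@[simp]
lemma map_pure (φ : V →ₗ[B] W) (v : V) (y : R) : D.map φ (D.pure v y) = D.pure (φ v) y := rfl

lemma map_comp_apply {X : Type u} [AddCommGroup X] [Module k X] [Module B X] [IsScalarTower k B X]
    (ψ : W →ₗ[B] X) (φ : V →ₗ[B] W) (x : D.Ind V) :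
    D.map (ψ ∘ₗ φ) x = D.map ψ (D.map φ x) :=
  LinearMap.rTensor_comp_apply R (ψ.restrictScalars k) (φ.restrictScalars k) x

lemma map_id_apply (x : D.Ind V) : D.map (LinearMap.id : V →ₗ[B] V) x = x :=
  LinearMap.rTensor_id_apply R V x

lemma map_surjective {φ : V →ₗ[B] W} (h : Function.Surjective φ) :
    Function.Surjective (D.map φ) :=
  LinearMap.rTensor_surjective R (g := φ.restrictScalars k) h

lemma map_injective {φ : V →ₗ[B] W} (h : Function.Injective φ) :
    Function.Injective (D.map φ) :=
  Module.Flat.rTensor_preserves_injective_linearMap (M := R) (φ.restrictScalars k) h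

lemma map_exact {X : Type u} [AddCommGroup X] [Module k X] [Module B X] [IsScalarTower k B X]
    {φ : V →ₗ[B] W} {ψ : W →ₗ[B] X} (h : Function.Exact φ ψ) (hψ : Function.Surjective ψ) :
    Function.Exact (D.map φ) (D.map ψ) :=
  rTensor_exact R (f := φ.restrictScalars k) (g := ψ.restrictScalars k) h hψ

/-- The Galois isomorphism `E ≃ B ⊗ R`. -/
noncomputable def galois : E ≃ₗ[k] D.Ind B := LinearEquiv.ofBijective _ D.bijective

lemma galois_apply (e : E) : D.galois e = e • D.pure 1 D.r := by
  rw [ind_smul_def]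
  show ((LinearMap.toSpanSingleton E R D.r).restrictScalars k).lTensor B (D.δ e) =
    tensorAct k B E R B (D.δ e) ((1 : B) ⊗ₜ[k] D.r)
  induction D.δ e with
  | zero => simp
  | add t t' h h' => simp only [_root_.map_add, LinearMap.add_apply, h, h']
  | tmul b e => simp

lemma smul_pure_r (e : E) (v : V) :
    e • D.pure v D.r = D.map (LinearMap.toSpanSingleton B V v) (D.galois e) := by
  rw [galois_apply, map_smul, map_pure]
  simp

/-- The algebra map `B → E` afforded by the Galois isomorphism. -/
noncomputable def κ : B →ₗ[k] E :=
  D.galois.symm.toLinearMap ∘ₗ (TensorProduct.mk k B R).flip D.r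

lemma galois_κ (a : B) : D.galois (D.κ a) = D.pure a D.r :=
  D.galois.apply_symm_apply _

lemma κ_smul_pure_r (a : B) (v : V) : D.κ a • D.pure v D.r = D.pure (a • v) D.r := by
  rw [smul_pure_r, galois_κ, map_pure]
  simp

lemma κ_mul (a b : B) : D.κ (a * b) = D.κ a * D.κ b := by
  apply D.galois.injective
  rw [galois_κ, galois_apply, mul_smul, ← galois_apply, galois_κ, κ_smul_pure_r, smul_eq_mul]

lemma κ_one : D.κ 1 = 1 := by
  apply D.galois.injective
  rw [galois_κ, galois_apply, one_smul]

lemma coact_κ (a : B) : D.δ (D.κ a) = D.κ.lTensor B (D.Δ a) := by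
  apply Module.Flat.lTensor_preserves_injective_linearMap (M := B) _ D.bijective.1
  have h1 : ∀ t : B ⊗[k] E, TensorProduct.assoc k B B R (D.Δ.rTensor R
      (((LinearMap.toSpanSingleton E R D.r).restrictScalars k).lTensor B t)) =
      (((LinearMap.toSpanSingleton E R D.r).restrictScalars k).lTensor B).lTensor B
        (TensorProduct.assoc k B B E (D.Δ.rTensor E t)) := by
    intro t
    induction t with
    | zero => simp
    | add t t' h h' => simp only [_root_.map_add, h, h']
    | tmul b e =>
      simp only [LinearMap.lTensor_tmul, LinearMap.rTensor_tmul]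
      induction D.Δ b with
      | zero => simp
      | add t t' h h' => simp only [_root_.map_add, TensorProduct.add_tmul, h, h']
      | tmul b c => simp
  have h2 := LinearMap.congr_fun D.coact_coassoc (D.κ a)
  simp only [LinearMap.comp_apply, LinearEquiv.coe_coe] at h2
  have h3 := h1 (D.δ (D.κ a))
  have h4 : ((LinearMap.toSpanSingleton E R D.r).restrictScalars k).lTensor B (D.δ (D.κ a)) =
    a ⊗ₜ D.r := D.galois_κ a
  rw [AlgHom.toLinearMap_apply] at h2
  rw [LinearMap.lTensor_comp_apply, ← h2, ← h3, h4, LinearMap.rTensor_tmul,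
    ← LinearMap.lTensor_comp_apply]
  have h6 : (((LinearMap.toSpanSingleton E R D.r).restrictScalars k).lTensor B ∘ₗ
      D.δ.toLinearMap) ∘ₗ D.κ = (TensorProduct.mk k B R).flip D.r :=
    LinearMap.ext fun a => D.galois_κ a
  refine Eq.trans ?_ (LinearMap.congr_fun (congrArg (LinearMap.lTensor B) h6.symm) (D.Δ a))
  induction D.Δ a with
  | zero => simp
  | add t t' h h' => simp only [_root_.map_add, TensorProduct.add_tmul, h, h']
  | tmul b c => simp

lemma κ_smul_r (a : B) : D.κ a • D.r = D.ε a • D.r := by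
  have h : ∀ t : B ⊗[k] E, TensorProduct.lid k R (D.ε.toLinearMap.rTensor R
      (((LinearMap.toSpanSingleton E R D.r).restrictScalars k).lTensor B t)) =
      TensorProduct.lid k E (D.ε.toLinearMap.rTensor E t) • D.r := by
    intro t
    induction t with
    | zero => simp
    | add t t' h h' => simp only [_root_.map_add, h, h', add_smul]
    | tmul b e => simp
  have h' := h (D.δ (D.κ a))
  have h2 := LinearMap.congr_fun D.coact_counit (D.κ a)
  have h4 : ((LinearMap.toSpanSingleton E R D.r).restrictScalars k).lTensor B (D.δ (D.κ a)) =
    a ⊗ₜ D.r := D.galois_κ a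
  simp only [LinearMap.comp_apply, LinearEquiv.coe_coe, AlgHom.toLinearMap_apply] at h2
  rw [h2, h4] at h'
  simpa using h'.symm

lemma κ_smul_def (a : B) (x : D.Ind V) :
    D.κ a • x = tensorAct k B E R V (D.κ.lTensor B (D.Δ a)) x := by
  rw [ind_smul_def, coact_κ]

/-- The map `b ⊗ y ↦ b₍₁₎ ⊗ j(b₍₂₎) y` on `B ⊗ R`, for `j : B → E`. -/
noncomputable def shear (j : B →ₗ[k] E) : B ⊗[k] R →ₗ[k] B ⊗[k] R :=
  (TensorProduct.lift (Algebra.lsmul k k R : E →ₐ[k] _).toLinearMap).lTensor B ∘ₗ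
    (TensorProduct.assoc k B E R).toLinearMap ∘ₗ (j.lTensor B ∘ₗ D.Δ).rTensor R

lemma shear_comp {i j : B →ₗ[k] E}
    (h : LinearMap.mul' k E ∘ₗ TensorProduct.map i j ∘ₗ D.Δ
      = Algebra.linearMap k E ∘ₗ D.ε.toLinearMap) (x : B ⊗[k] R) :
    D.shear i (D.shear j x) = x := by
  induction x with
  | zero => simp
  | add x x' h h' => simp only [_root_.map_add, h, h']
  | tmul b y =>
    let g : E →ₗ[k] R := (LinearMap.toSpanSingleton E R y).restrictScalars k
    have h1 : ∀ t : B ⊗[k] B, D.shear i ((TensorProduct.lift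
        (Algebra.lsmul k k R : E →ₐ[k] _).toLinearMap).lTensor B
          (TensorProduct.assoc k B E R (j.lTensor B t ⊗ₜ y))) =
        (g ∘ₗ LinearMap.mul' k E ∘ₗ TensorProduct.map i j).lTensor B
          (TensorProduct.assoc k B B B (D.Δ.rTensor B t)) := by
      intro t
      induction t with
      | zero => simp
      | add t t' h h' => simp only [_root_.map_add, TensorProduct.add_tmul, h, h']
      | tmul b c =>
        simp only [shear, LinearMap.lTensor_tmul, LinearMap.rTensor_tmul, LinearMap.comp_apply,
          TensorProduct.assoc_tmul, TensorProduct.lift.tmul, LinearEquiv.coe_coe]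
        induction D.Δ b with
        | zero => simp
        | add t t' h h' => simp only [_root_.map_add, TensorProduct.add_tmul, h, h']
        | tmul b d => simp [g, mul_smul]
    have h2 := LinearMap.congr_fun D.comul_coassoc b
    have h3 := LinearMap.congr_fun D.comul_counit b
    simp only [LinearMap.comp_apply, LinearEquiv.coe_coe, LinearMap.id_apply] at h2 h3
    have h4 : (g ∘ₗ LinearMap.mul' k E ∘ₗ TensorProduct.map i j) ∘ₗ D.Δ =
        LinearMap.toSpanSingleton k R y ∘ₗ D.ε.toLinearMap := by
      rw [LinearMap.comp_assoc, LinearMap.comp_assoc, h]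
      ext a
      simp [g]
    refine (h1 (D.Δ b)).trans ?_
    rw [h2, ← LinearMap.lTensor_comp_apply, h4, LinearMap.lTensor_comp_apply,
      (LinearEquiv.eq_symm_apply _).2 h3]
    simp

lemma mul_map_κ (i j : B →ₗ[k] B) (h : LinearMap.mul' k B ∘ₗ TensorProduct.map i j ∘ₗ D.Δ
      = Algebra.linearMap k B ∘ₗ D.ε.toLinearMap) :
    LinearMap.mul' k E ∘ₗ TensorProduct.map (D.κ ∘ₗ i) (D.κ ∘ₗ j) ∘ₗ D.Δ
      = Algebra.linearMap k E ∘ₗ D.ε.toLinearMap := by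
  have h1 : LinearMap.mul' k E ∘ₗ TensorProduct.map (D.κ ∘ₗ i) (D.κ ∘ₗ j) =
      D.κ ∘ₗ LinearMap.mul' k B ∘ₗ TensorProduct.map i j := by
    ext a b
    simp [κ_mul]
  rw [← LinearMap.comp_assoc, h1, LinearMap.comp_assoc, LinearMap.comp_assoc, h]
  ext a
  simp [Algebra.linearMap_apply, Algebra.algebraMap_eq_smul_one, κ_one]

lemma shear_κ_tmul (b : B) (y : R) :
    D.shear D.κ (b ⊗ₜ y) = (D.κ b • D.pure (1 : B) y : D.Ind B) := by
  rw [κ_smul_def]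
  show _ = tensorAct k B E R B (D.κ.lTensor B (D.Δ b)) ((1 : B) ⊗ₜ[k] y)
  simp only [shear, LinearMap.comp_apply, LinearMap.rTensor_tmul]
  induction D.Δ b with
  | zero => simp
  | add t t' h h' => simp only [_root_.map_add, TensorProduct.add_tmul, h, h', LinearMap.add_apply]
  | tmul b c => simp

lemma shear_κ_smul (a : B) (x : B ⊗[k] R) :
    @Eq (D.Ind B) (D.shear D.κ (a • x)) (D.κ a • (show D.Ind B from D.shear D.κ x)) := by
  induction x with
  | zero =>
    rw [smul_zero, _root_.map_zero]
    show (0 : D.Ind B) = D.κ a • (0 : D.Ind B)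
    rw [smul_zero]
  | add x x' h h' =>
    rw [smul_add, _root_.map_add, _root_.map_add]
    exact (congrArg₂ (· + ·) h h').trans (smul_add (D.κ a) _ _).symm
  | tmul b y =>
    rw [TensorProduct.smul_tmul', shear_κ_tmul, shear_κ_tmul, smul_eq_mul, κ_mul, mul_smul]

variable (V) in
/-- `V` is a retract of `Ind V`, compatibly with the actions of `B`. -/
def HasRetraction : Prop :=
  ∃ s : D.Ind V →+ V, (∀ (a : B) (x : D.Ind V), s (D.κ a • x) = a • s x) ∧
    ∀ v : V, s (D.pure v D.r) = v

lemma hasRetraction_self : D.HasRetraction B := by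
  obtain ⟨f, hf⟩ := Module.Projective.exists_dual_ne_zero k D.r_ne_zero
  have l := D.shear_comp (D.mul_map_κ D.S LinearMap.id D.antipode_left)
  have r := D.shear_comp (D.mul_map_κ LinearMap.id D.S D.antipode_right)
  rw [LinearMap.comp_id] at l r
  let s : D.Ind B →ₗ[k] B := (TensorProduct.rid k B).toLinearMap ∘ₗ
    ((f D.r)⁻¹ • f).lTensor B ∘ₗ D.shear (D.κ ∘ₗ D.S)
  have hs : ∀ x : B ⊗[k] R, s (D.shear D.κ x) =
      TensorProduct.rid k B (((f D.r)⁻¹ • f).lTensor B x) := fun x => by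
    rw [← congrArg (fun x => TensorProduct.rid k B (((f D.r)⁻¹ • f).lTensor B x)) (l x)]
    rfl
  refine ⟨s.toAddMonoidHom, fun a x => ?_, fun b => ?_⟩
  · obtain ⟨x, rfl⟩ : ∃ x', D.shear D.κ x' = x := ⟨_, r x⟩
    refine (congrArg s (D.shear_κ_smul a x).symm).trans ((hs _).trans ?_)
    refine Eq.trans ?_ (congrArg (a • ·) (hs x)).symm
    induction x with
    | zero => simp
    | add x x' h h' => simp only [smul_add, _root_.map_add, h, h']
    | tmul b y => simp [TensorProduct.smul_tmul']
  · have h1 : (D.pure b D.r) = D.shear D.κ (b ⊗ₜ D.r) := by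
      rw [shear_κ_tmul, κ_smul_pure_r, smul_eq_mul, mul_one]
    rw [h1]
    refine (hs _).trans ?_
    simp [hf]

variable {D} in
lemma HasRetraction.of_retract (h : D.HasRetraction W) (i : V →ₗ[B] W) (p : W →ₗ[B] V)
    (hpi : p ∘ₗ i = LinearMap.id) : D.HasRetraction V := by
  obtain ⟨s, hs, hs'⟩ := h
  refine ⟨(p : W →+ V).comp (s.comp (D.map i : D.Ind V →+ D.Ind W)), fun a x => ?_, fun v => ?_⟩
  · simp [hs]
  · simpa [hs'] using LinearMap.congr_fun hpi v

lemma finsuppLeft_map_single {ι : Type u} [DecidableEq ι] (i : ι) (x : D.Ind V) :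
    TensorProduct.finsuppLeft k k V R ι (D.map (Finsupp.lsingle i) x) =
      Finsupp.single i (show V ⊗[k] R from x) := by
  show TensorProduct.finsuppLeft k k V R ι
    (((Finsupp.lsingle i : V →ₗ[B] _).restrictScalars k).rTensor R x) = _
  induction (show V ⊗[k] R from x) with
  | zero => simp
  | add x x' h h' => simp only [_root_.map_add, Finsupp.single_add, h, h']
  | tmul v y => simp [TensorProduct.finsuppLeft_apply_tmul]

lemma ind_finsupp_induction {ι : Type u} {p : D.Ind (ι →₀ V) → Prop}
    (h0 : p 0) (hadd : ∀ x y, p x → p y → p (x + y))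
    (h : ∀ i x, p (D.map (Finsupp.lsingle i : V →ₗ[B] _) x)) (x : D.Ind (ι →₀ V)) : p x := by
  refine TensorProduct.induction_on (motive := p) x h0 (fun v y => ?_) hadd
  induction v using Finsupp.induction_linear with
  | zero => rw [TensorProduct.zero_tmul]; exact h0
  | add v w hv hw => rw [TensorProduct.add_tmul]; exact hadd _ _ hv hw
  | single i b => exact h i (D.pure b y)

variable {D} in
lemma HasRetraction.finsupp (h : D.HasRetraction V) (ι : Type u) :
    D.HasRetraction (ι →₀ V) := by
  classical
  obtain ⟨s, hs, hs'⟩ := h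
  let s' : D.Ind (ι →₀ V) →+ (ι →₀ V) := (Finsupp.mapRange.addMonoidHom s).comp
    (TensorProduct.finsuppLeft k k V R ι).toLinearMap.toAddMonoidHom
  have key : ∀ i x, s' (D.map (Finsupp.lsingle i) x) = Finsupp.single i (s x) := fun i x => by
    refine (congrArg (Finsupp.mapRange.addMonoidHom s) (D.finsuppLeft_map_single i x)).trans ?_
    exact Finsupp.mapRange_single (hf := _root_.map_zero s)
  refine ⟨s', fun a x => ?_, fun v => ?_⟩
  · refine D.ind_finsupp_induction (p := fun x => s' (D.κ a • x) = a • s' x) ?_ ?_ ?_ x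
    · simp
    · intro x y hx hy
      rw [smul_add, _root_.map_add, hx, hy, _root_.map_add, smul_add]
    · intro i x
      rw [← map_smul, key, key, hs, Finsupp.smul_single]
  · induction v using Finsupp.induction_linear with
    | zero => exact (congrArg s' (TensorProduct.zero_tmul _ _)).trans (_root_.map_zero s')
    | add v w hv hw =>
      refine (congrArg s' (TensorProduct.add_tmul _ _ _)).trans ((_root_.map_add s' _ _).trans ?_)
      exact congrArg₂ (· + ·) hv hw
    | single i b =>
      exact (key i (D.pure b D.r)).trans (by rw [hs'])

lemma hasRetraction_of_projective [Module.Projective B V] : D.HasRetraction V := by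
  obtain ⟨i, hi⟩ := (Module.projective_def' (R := B) (P := V)).1 inferInstance
  exact (D.hasRetraction_self.finsupp V).of_retract i _ hi

lemma projective_ind_finsupp (ι : Type u) : Module.Projective E (D.Ind (ι →₀ B)) := by
  classical
  let Φ : (ι →₀ E) →ₗ[E] D.Ind (ι →₀ B) :=
    Finsupp.linearCombination E fun i => D.pure (Finsupp.single i 1) D.r
  have h : ∀ x, TensorProduct.finsuppLeft k k B R ι (Φ x) =
      Finsupp.mapRange.linearEquiv D.galois x := by
    intro x
    induction x using Finsupp.induction_linear with
    | zero =>
      rw [_root_.map_zero, _root_.map_zero]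
      exact _root_.map_zero (TensorProduct.finsuppLeft k k B R ι)
    | add x y hx hy =>
      rw [_root_.map_add, _root_.map_add, ← hx, ← hy]
      exact _root_.map_add (TensorProduct.finsuppLeft k k B R ι) _ _
    | single i e =>
      have : Φ (Finsupp.single i e) = D.map (Finsupp.lsingle i) (D.galois e) := by
        rw [galois_apply, map_smul, map_pure]
        simp [Φ]
      rw [this, finsuppLeft_map_single]
      exact (Finsupp.mapRange_single (hf := D.galois.map_zero)).symm
  have hΦ : Function.Bijective Φ := by
    have : Function.Bijective (TensorProduct.finsuppLeft k k B R ι ∘ Φ) := by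
      rw [show TensorProduct.finsuppLeft k k B R ι ∘ Φ = _ from funext h]
      exact LinearEquiv.bijective _
    exact (Function.Bijective.of_comp_iff' (LinearEquiv.bijective _) _).1 this
  exact Module.Projective.of_equiv (LinearEquiv.ofBijective Φ hΦ)

lemma projective_ind [Module.Projective B V] : Module.Projective E (D.Ind V) := by
  obtain ⟨i, hi⟩ := (Module.projective_def' (R := B) (P := V)).1 inferInstance
  have := D.projective_ind_finsupp V
  refine Module.Projective.of_split (D.map i) (D.map (Finsupp.linearCombination B id)) ?_
  ext x
  rw [LinearMap.comp_apply, ← map_comp_apply, hi, map_id_apply, LinearMap.id_apply]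

/-- A functional on `R` witnessing that the retractions of the unit maps can be chosen
naturally. -/
def HasInvariantFunctional : Prop :=
  ∃ e : R →ₗ[k] k, e D.r = 1 ∧ ∀ (a : B) (y : R), e (D.κ a • y) = D.ε a * e y

variable {D} in
lemma HasInvariantFunctional.exists_natural (h : D.HasInvariantFunctional) :
    ∃ s : ∀ (V : Type u) [AddCommGroup V] [Module k V] [Module B V] [IsScalarTower k B V],
      D.Ind V →+ V,
      (∀ (V : Type u) [AddCommGroup V] [Module k V] [Module B V] [IsScalarTower k B V],
        (∀ (a : B) (x : D.Ind V), s V (D.κ a • x) = a • s V x) ∧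
          ∀ v : V, s V (D.pure v D.r) = v) ∧
      ∀ (V W : Type u) [AddCommGroup V] [Module k V] [Module B V] [IsScalarTower k B V]
        [AddCommGroup W] [Module k W] [Module B W] [IsScalarTower k B W]
        (φ : V →ₗ[B] W) (x : D.Ind V), s W (D.map φ x) = φ (s V x) := by
  obtain ⟨e, he, he'⟩ := h
  refine ⟨fun V _ _ _ _ => ((TensorProduct.rid k V).toLinearMap ∘ₗ e.lTensor V).toAddMonoidHom,
    fun V _ _ _ _ => ⟨fun a x => ?_, fun v => ?_⟩, fun V W _ _ _ _ _ _ _ _ φ x => ?_⟩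
  · rw [κ_smul_def]
    show TensorProduct.rid k V (e.lTensor V (tensorAct k B E R V (D.κ.lTensor B (D.Δ a)) x)) =
      a • TensorProduct.rid k V (e.lTensor V x)
    have h1 : ∀ (t : B ⊗[k] B) (v : V) (y : R), TensorProduct.rid k V (e.lTensor V
        (tensorAct k B E R V (D.κ.lTensor B t) (v ⊗ₜ y))) =
        e y • (TensorProduct.rid k B (D.ε.toLinearMap.lTensor B t)) • v := by
      intro t v y
      induction t with
      | zero => simp
      | add t t' h h' => simp only [_root_.map_add, LinearMap.add_apply, h, h', add_smul, smul_add]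
      | tmul b c => simp [he', mul_comm (D.ε c), mul_smul]
    have h3 := LinearMap.congr_fun D.comul_counit a
    simp only [LinearMap.comp_apply, LinearEquiv.coe_coe, LinearMap.id_apply] at h3
    refine TensorProduct.induction_on (motive := fun x => TensorProduct.rid k V (e.lTensor V
      (tensorAct k B E R V (D.κ.lTensor B (D.Δ a)) x)) =
      a • TensorProduct.rid k V (e.lTensor V x)) x ?_ (fun v y => ?_) (fun x x' h h' => ?_)
    · simp
    · rw [h1, h3]
      simp [smul_comm a (e y) v]
    · simp only [_root_.map_add, h, h', smul_add]
  · show TensorProduct.rid k V (e.lTensor V (v ⊗ₜ D.r)) = v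
    simp [he]
  · show TensorProduct.rid k W (e.lTensor W ((φ.restrictScalars k).rTensor R x)) =
      φ (TensorProduct.rid k V (e.lTensor V x))
    refine TensorProduct.induction_on (motive := fun x => TensorProduct.rid k W (e.lTensor W
      ((φ.restrictScalars k).rTensor R x)) = φ (TensorProduct.rid k V (e.lTensor V x))) x ?_
        (fun v y => ?_) (fun x x' h h' => ?_)
    · simp
    · simp
    · simp only [_root_.map_add, h, h']

/-- Given compatible retractions, an `E`-linear map `Ind V → Ind W` descends to `V → W`. -/
noncomputable def descend (s : D.Ind W →+ W) (hs : ∀ (a : B) (x : D.Ind W), s (D.κ a • x) = a • s x)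
    (g : D.Ind V →ₗ[E] D.Ind W) : V →ₗ[B] W where
  toFun v := s (g (D.pure v D.r))
  map_add' v w := by
    rw [← _root_.map_add, ← _root_.map_add]
    exact congrArg (fun x => s (g x)) (TensorProduct.add_tmul v w D.r)
  map_smul' a v := by
    rw [← κ_smul_pure_r, map_smul, hs, RingHom.id_apply]

lemma projective_of_projective_ind_of_hasInvariantFunctional (h : D.HasInvariantFunctional)
    [Module.Projective E (D.Ind V)] : Module.Projective B V := by
  obtain ⟨s, hs, hnat⟩ := h.exists_natural
  let π : (V →₀ B) →ₗ[B] V := Finsupp.linearCombination B id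
  have hπ : Function.Surjective π := Finsupp.linearCombination_id_surjective B V
  obtain ⟨g, hg⟩ := Module.projective_lifting_property (D.map π) LinearMap.id (D.map_surjective hπ)
  refine Module.Projective.of_split (D.descend (s (V →₀ B)) (hs _).1 g) π ?_
  ext v
  show π (s (V →₀ B) (g (D.pure v D.r))) = v
  rw [← hnat, ← LinearMap.comp_apply, hg, LinearMap.id_apply, (hs V).2]

lemma projective_of_ses {K P : Type u} [AddCommGroup K] [Module k K] [Module B K]
    [IsScalarTower k B K] [AddCommGroup P] [Module k P] [Module B P] [IsScalarTower k B P]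
    {φ : K →ₗ[B] P} {π : P →ₗ[B] V} (hφ : Function.Injective φ) (hπ : Function.Surjective π)
    (hex : Function.Exact φ π) [Module.Projective B K] [Module.Projective B P]
    [Module.Projective E (D.Ind V)] : Module.Projective B V := by
  obtain ⟨g, hg⟩ := Module.projective_lifting_property (D.map π) LinearMap.id (D.map_surjective hπ)
  obtain ⟨s, hs, hs'⟩ := D.hasRetraction_of_projective (V := K)
  have hex' := D.map_exact hex hπ
  have split := (hex'.split_tfae'.out 0 1).1
  obtain ⟨_, r, hr⟩ := split ⟨D.map_injective hφ, g, hg⟩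
  have : D.descend s hs r ∘ₗ φ = LinearMap.id := by
    ext v
    show s (r (D.pure (φ v) D.r)) = v
    rw [← map_pure, ← LinearMap.comp_apply, hr, LinearMap.id_apply, hs']
  have split' := (hex.split_tfae'.out 1 0).1
  obtain ⟨_, l, hl⟩ := split' ⟨hπ, _, this⟩
  exact Module.Projective.of_split l π hl

lemma hasProjectiveDimensionLT_ind_ker_freeCover_iff (n : ℕ) :
    HasProjectiveDimensionLT (ModuleCat.of E (D.Ind V)) (n + 2) ↔
      HasProjectiveDimensionLT (ModuleCat.of E (D.Ind (LinearMap.ker (freeCover B V)))) (n + 1) :=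
  hasProjectiveDimensionLT_syzygy_iff
    (D.map_injective (LinearMap.ker (freeCover B V)).injective_subtype)
    (D.map_surjective (freeCover_surjective V))
    (D.map_exact (LinearMap.exact_subtype_ker_map _) (freeCover_surjective V))
    D.projective_ind n

lemma hasProjectiveDimensionLT_ind (n : ℕ) : ∀ (V : Type u) [AddCommGroup V] [Module k V]
    [Module B V] [IsScalarTower k B V], HasProjectiveDimensionLT (ModuleCat.of B V) (n + 1) →
      HasProjectiveDimensionLT (ModuleCat.of E (D.Ind V)) (n + 1) := by
  induction n with
  | zero =>
    intro V _ _ _ _ h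
    rw [zero_add, hasProjectiveDimensionLT_one_iff] at h ⊢
    exact D.projective_ind
  | succ n ih =>
    intro V _ _ _ _ h
    rw [hasProjectiveDimensionLT_ker_freeCover_iff] at h
    rw [hasProjectiveDimensionLT_ind_ker_freeCover_iff]
    exact ih _ h

lemma projective_of_projective_ind (n : ℕ) : ∀ (V : Type u) [AddCommGroup V] [Module k V]
    [Module B V] [IsScalarTower k B V], HasProjectiveDimensionLT (ModuleCat.of B V) (n + 1) →
      Module.Projective E (D.Ind V) → Module.Projective B V := by
  induction n with
  | zero =>
    intro V _ _ _ _ h _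
    rwa [zero_add, hasProjectiveDimensionLT_one_iff] at h
  | succ n ih =>
    intro V _ _ _ _ h hV
    rw [hasProjectiveDimensionLT_ker_freeCover_iff] at h
    have hK : Module.Projective E (D.Ind (LinearMap.ker (freeCover B V))) := by
      rw [← hasProjectiveDimensionLT_one_iff] at hV ⊢
      rw [← zero_add 1, ← hasProjectiveDimensionLT_ind_ker_freeCover_iff]
      exact hasProjectiveDimensionLT_of_ge _ 1 _ (by omega)
    have := ih _ h hK
    exact D.projective_of_ses (LinearMap.ker (freeCover B V)).injective_subtype
      (freeCover_surjective V) (LinearMap.exact_subtype_ker_map _)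

lemma hasProjectiveDimensionLT_of_ind (n m : ℕ) : ∀ (V : Type u) [AddCommGroup V] [Module k V]
    [Module B V] [IsScalarTower k B V],
      D.HasInvariantFunctional ∨ HasProjectiveDimensionLT (ModuleCat.of B V) (m + 1) →
      HasProjectiveDimensionLT (ModuleCat.of E (D.Ind V)) (n + 1) →
        HasProjectiveDimensionLT (ModuleCat.of B V) (n + 1) := by
  induction n with
  | zero =>
    intro V _ _ _ _ hm h
    rw [zero_add, hasProjectiveDimensionLT_one_iff] at h ⊢
    obtain hm | hm := hm
    · exact D.projective_of_projective_ind_of_hasInvariantFunctional hm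
    · exact D.projective_of_projective_ind m V hm h
  | succ n ih =>
    intro V _ _ _ _ hm h
    rw [hasProjectiveDimensionLT_ind_ker_freeCover_iff] at h
    rw [hasProjectiveDimensionLT_ker_freeCover_iff]
    refine ih _ (hm.imp_right fun hm => ?_) h
    rw [← hasProjectiveDimensionLT_ker_freeCover_iff]
    exact @hasProjectiveDimensionLT_of_ge _ _ _ _ (m + 1) (m + 2) (by omega) hm

/-- The base field, with `B` acting through the counit. -/
def Triv (_D : GaloisDatum k B E R) : Type u := k

instance : AddCommGroup D.Triv := inferInstanceAs (AddCommGroup k)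

instance : Module k D.Triv := inferInstanceAs (Module k k)

instance : Module B D.Triv := Module.compHom k D.ε.toRingHom

instance : IsScalarTower k B D.Triv where
  smul_assoc c b x := by
    show D.ε (c • b) * (show k from x) = c * (D.ε b * (show k from x))
    rw [map_smul, smul_eq_mul, mul_assoc]

/-- The module induced from the trivial module is `R`. -/
noncomputable def indTrivEquiv : D.Ind D.Triv ≃ₗ[E] R where
  __ := (TensorProduct.lid k R).toAddEquiv
  map_smul' e x := by
    let L : D.Triv ⊗[k] R →ₗ[k] R := (TensorProduct.lid k R).toLinearMap
    show L (tensorAct k B E R D.Triv (D.δ e) x) = e • L x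
    have h1 : ∀ (t : B ⊗[k] E) (v : D.Triv) (y : R), L (tensorAct k B E R D.Triv t (v ⊗ₜ y)) =
        (TensorProduct.lid k E (D.ε.toLinearMap.rTensor E t)) • L (v ⊗ₜ y) := by
      intro t v y
      induction t with
      | zero => simp
      | add t t' h h' => simp only [_root_.map_add, LinearMap.add_apply, h, h', add_smul]
      | tmul b e =>
        obtain ⟨c, rfl⟩ : ∃ c : k, c = v := ⟨v, rfl⟩
        show (D.ε b * c) • e • y = (D.ε b • e) • c • y
        rw [mul_smul, smul_assoc, smul_comm e c y]
    have h3 := LinearMap.congr_fun D.coact_counit e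
    simp only [LinearMap.comp_apply, LinearEquiv.coe_coe, LinearMap.id_apply,
      AlgHom.toLinearMap_apply] at h3
    refine TensorProduct.induction_on (motive := fun x => L (tensorAct k B E R D.Triv (D.δ e) x) =
      e • L x) x ?_ (fun v y => ?_) (fun x x' h h' => ?_)
    · simp
    · rw [h1, h3]
    · simp only [_root_.map_add, h, h', smul_add]

lemma extPD_le {n : ℕ} (h : extPD (ModuleCat.of B D.Triv) ≤ n) :
    extPD (ModuleCat.of E R) ≤ n := by
  rw [extPD_le_iff] at h ⊢
  have := D.hasProjectiveDimensionLT_ind n _ h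
  exact hasProjectiveDimensionLT_of_iso D.indTrivEquiv.toModuleIso _

lemma extPD_eq (h : D.HasInvariantFunctional ∨ extPD (ModuleCat.of B D.Triv) ≠ ⊤) :
    extPD (ModuleCat.of B D.Triv) = extPD (ModuleCat.of E R) := by
  have key : ∀ n : ℕ, extPD (ModuleCat.of E R) ≤ n → extPD (ModuleCat.of B D.Triv) ≤ n := by
    intro n hn
    rw [extPD_le_iff] at hn ⊢
    have hn' := hasProjectiveDimensionLT_of_iso D.indTrivEquiv.symm.toModuleIso (n + 1)
    obtain ⟨m, hm⟩ : ∃ m, D.HasInvariantFunctional ∨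
        HasProjectiveDimensionLT (ModuleCat.of B D.Triv) (m + 1) := by
      obtain h | h := h
      · exact ⟨0, Or.inl h⟩
      · obtain ⟨m, hm⟩ := ENat.ne_top_iff_exists.1 h
        exact ⟨m, Or.inr ((extPD_le_iff _ _).1 hm.ge)⟩
    exact D.hasProjectiveDimensionLT_of_ind n m _ hm hn'
  apply le_antisymm
  · induction h' : extPD (ModuleCat.of E R) using ENat.recTopCoe with
    | top => exact le_top
    | coe n => exact key n h'.le
  · induction h' : extPD (ModuleCat.of B D.Triv) using ENat.recTopCoe with
    | top => exact le_top
    | coe n => exact D.extPD_le h'.le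

end Induced

end GaloisDatum

section Left

attribute [local instance] TensorProduct.Algebra.module envTower

variable {k A R : Type u} [Field k] [Ring A] [HopfAlgebra k A] [Ring R] [Algebra k R]

lemma env_smul_one (x : R) (y : Rᵐᵒᵖ) : (x ⊗ₜ[k] y) • (1 : R) = x * y.unop := by
  rw [TensorProduct.Algebra.smul_def]
  simp

/-- The coaction of a left comodule algebra as an algebra map. -/
noncomputable def lamAlgHom (c : LeftComodAlg k A R) : R →ₐ[k] A ⊗[k] R :=
  AlgHom.ofLinearMap c.lam c.map_one c.map_mul

/-- The coaction `x ⊗ y ↦ x₍₋₁₎ ⊗ (x₍₀₎ ⊗ y)` on the enveloping algebra. -/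
noncomputable def leftEnvCoact (c : LeftComodAlg k A R) :
    R ⊗[k] Rᵐᵒᵖ →ₐ[k] A ⊗[k] (R ⊗[k] Rᵐᵒᵖ) :=
  (Algebra.TensorProduct.assoc k k k A R Rᵐᵒᵖ).toAlgHom.comp
    (Algebra.TensorProduct.map (lamAlgHom c) (AlgHom.id k Rᵐᵒᵖ))

lemma leftEnvCoact_tmul (c : LeftComodAlg k A R) (x : R) (y : Rᵐᵒᵖ) :
    leftEnvCoact c (x ⊗ₜ y) = TensorProduct.assoc k A R Rᵐᵒᵖ (c.lam x ⊗ₜ y) := rfl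

/-- The Galois datum of a left Galois object. -/
noncomputable def leftDatum (c : LeftComodAlg k A R) (h : c.IsGalois) :
    GaloisDatum k A (R ⊗[k] Rᵐᵒᵖ) R where
  Δ := Coalgebra.comul
  ε := Bialgebra.counitAlgHom k A
  S := HopfAlgebra.antipode k
  comul_coassoc := Coalgebra.coassoc
  comul_counit := by
    ext a
    simp
  antipode_left := HopfAlgebra.mul_antipode_rTensor_comul
  antipode_right := HopfAlgebra.mul_antipode_lTensor_comul
  δ := leftEnvCoact c
  coact_coassoc := by
    refine TensorProduct.ext' fun x y => ?_
    have key (t : A ⊗[k] R) : TensorProduct.assoc k A A (R ⊗[k] Rᵐᵒᵖ)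
        (Coalgebra.comul.rTensor (R ⊗[k] Rᵐᵒᵖ) (TensorProduct.assoc k A R Rᵐᵒᵖ (t ⊗ₜ y)))
        = (((TensorProduct.mk k R Rᵐᵒᵖ).flip y).lTensor A).lTensor A
          (TensorProduct.assoc k A A R (Coalgebra.comul.rTensor R t)) := by
      induction t with
      | zero => simp
      | add t t' h h' => simp only [map_add, TensorProduct.add_tmul, h, h']
      | tmul a z =>
        simp only [TensorProduct.assoc_tmul, LinearMap.rTensor_tmul]
        induction Coalgebra.comul (R := k) a with
        | zero => simp
        | add t t' h h' => simp only [map_add, TensorProduct.add_tmul, h, h']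
        | tmul a b => rfl
    have key' (t : A ⊗[k] R) : (leftEnvCoact c).toLinearMap.lTensor A
        (TensorProduct.assoc k A R Rᵐᵒᵖ (t ⊗ₜ y))
        = (((TensorProduct.mk k R Rᵐᵒᵖ).flip y).lTensor A).lTensor A (c.lam.lTensor A t) := by
      induction t with
      | zero => simp
      | add t t' h h' => simp only [map_add, TensorProduct.add_tmul, h, h']
      | tmul a z =>
        simp only [TensorProduct.assoc_tmul, LinearMap.lTensor_tmul, AlgHom.toLinearMap_apply,
          leftEnvCoact_tmul]
        congr 1
        induction c.lam z with
        | zero => simp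
        | add t t' h h' => simp only [map_add, TensorProduct.add_tmul, h, h']
        | tmul a b => rfl
    have := LinearMap.congr_fun c.coassoc x
    simp only [LinearMap.comp_apply, LinearEquiv.coe_coe] at this
    simp only [LinearMap.comp_apply, LinearEquiv.coe_coe, AlgHom.toLinearMap_apply,
      leftEnvCoact_tmul]
    rw [key, key', this]
  coact_counit := by
    refine TensorProduct.ext' fun x y => ?_
    have key (t : A ⊗[k] R) : TensorProduct.lid k (R ⊗[k] Rᵐᵒᵖ)
        ((Bialgebra.counitAlgHom k A).toLinearMap.rTensor (R ⊗[k] Rᵐᵒᵖ)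
          (TensorProduct.assoc k A R Rᵐᵒᵖ (t ⊗ₜ y)))
        = TensorProduct.lid k R (Coalgebra.counit.rTensor R t) ⊗ₜ y := by
      induction t with
      | zero => simp
      | add t t' h h' => simp only [map_add, TensorProduct.add_tmul, h, h']
      | tmul a z => simp [TensorProduct.smul_tmul']
    have := LinearMap.congr_fun c.counit_comp x
    simp only [LinearMap.comp_apply, LinearEquiv.coe_coe, LinearMap.id_apply] at this
    simp only [LinearMap.comp_apply, LinearEquiv.coe_coe, AlgHom.toLinearMap_apply,
      leftEnvCoact_tmul, LinearMap.id_apply]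
    rw [key, this]
  r := 1
  r_ne_zero := by
    have := h.1
    exact one_ne_zero
  bijective := by
    have : ((LinearMap.toSpanSingleton (R ⊗[k] Rᵐᵒᵖ) R 1).restrictScalars k).lTensor A ∘ₗ
        (leftEnvCoact c).toLinearMap = c.can ∘ₗ
          ((MulOpposite.opLinearEquiv k).symm.toLinearMap.lTensor R : R ⊗[k] Rᵐᵒᵖ →ₗ[k] R ⊗[k] R) := by
      refine TensorProduct.ext' fun x y => ?_
      simp only [LinearMap.comp_apply, AlgHom.toLinearMap_apply, leftEnvCoact_tmul,
        LeftComodAlg.can, LinearMap.lTensor_tmul, LinearMap.rTensor_tmul, LinearEquiv.coe_coe]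
      induction c.lam x with
      | zero => simp
      | add t t' h h' => simp only [map_add, TensorProduct.add_tmul, h, h']
      | tmul a z => simp [env_smul_one]
    rw [this]
    exact h.2.comp (LinearEquiv.lTensor R (MulOpposite.opLinearEquiv k).symm).bijective

end Left

section Right

attribute [local instance] TensorProduct.Algebra.module envTower

variable {k A R : Type u} [Field k] [Ring A] [HopfAlgebra k A] [Ring R] [Algebra k R]

/-- The linear map `x ⊗ a ↦ a ⊗ x` from `R ⊗ A` to the tensor product of the opposites. -/
noncomputable def opSwap (k A R : Type u) [Field k] [Ring A] [Algebra k A] [Ring R] [Algebra k R] :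
    R ⊗[k] A ≃ₗ[k] Aᵐᵒᵖ ⊗[k] Rᵐᵒᵖ :=
  (TensorProduct.comm k R A).trans
    (TensorProduct.congr (MulOpposite.opLinearEquiv k) (MulOpposite.opLinearEquiv k))

@[simp]
lemma opSwap_tmul (x : R) (a : A) :
    opSwap k A R (x ⊗ₜ a) = MulOpposite.op a ⊗ₜ MulOpposite.op x := rfl

lemma opSwap_mul (s t : R ⊗[k] A) : opSwap k A R (s * t) = opSwap k A R t * opSwap k A R s := by
  induction s with
  | zero => simp
  | add s s' h h' => simp only [map_add, add_mul, mul_add, h, h']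
  | tmul x a =>
    induction t with
    | zero => simp
    | add t t' h h' => simp only [map_add, add_mul, mul_add, h, h']
    | tmul y b => simp

/-- The coaction of a right comodule algebra as an algebra map between opposites. -/
noncomputable def rhoAlgHom (c : RightComodAlg k A R) : Rᵐᵒᵖ →ₐ[k] Aᵐᵒᵖ ⊗[k] Rᵐᵒᵖ :=
  AlgHom.ofLinearMap
    ((opSwap k A R).toLinearMap ∘ₗ c.ρ ∘ₗ (MulOpposite.opLinearEquiv k).symm.toLinearMap)
    (by simp [c.map_one, Algebra.TensorProduct.one_def])
    (fun x y => by simp [c.map_mul, opSwap_mul])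

/-- The coaction `x ⊗ y ↦ y₍₁₎ ⊗ (x ⊗ y₍₀₎)` on the enveloping algebra. -/
noncomputable def rightEnvCoact (c : RightComodAlg k A R) :
    R ⊗[k] Rᵐᵒᵖ →ₐ[k] Aᵐᵒᵖ ⊗[k] (R ⊗[k] Rᵐᵒᵖ) :=
  (Algebra.TensorProduct.leftComm k R Aᵐᵒᵖ Rᵐᵒᵖ).toAlgHom.comp
    (Algebra.TensorProduct.map (AlgHom.id k R) (rhoAlgHom c))

lemma rightEnvCoact_tmul (c : RightComodAlg k A R) (x : R) (y : Rᵐᵒᵖ) :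
    rightEnvCoact c (x ⊗ₜ y)
      = (TensorProduct.mk k R Rᵐᵒᵖ x).lTensor Aᵐᵒᵖ (opSwap k A R (c.ρ y.unop)) := by
  have key (t : Aᵐᵒᵖ ⊗[k] Rᵐᵒᵖ) : Algebra.TensorProduct.leftComm k R Aᵐᵒᵖ Rᵐᵒᵖ (x ⊗ₜ t)
      = (TensorProduct.mk k R Rᵐᵒᵖ x).lTensor Aᵐᵒᵖ t := by
    induction t with
    | zero => simp
    | add t t' h h' => simp only [map_add, TensorProduct.tmul_add, h, h']
    | tmul a z => rfl
  exact key _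

/-- The comultiplication of the opposite-coopposite bialgebra. -/
noncomputable def opComul (k A : Type u) [Field k] [Ring A] [Bialgebra k A] :
    Aᵐᵒᵖ →ₗ[k] Aᵐᵒᵖ ⊗[k] Aᵐᵒᵖ :=
  (opSwap k A A).toLinearMap ∘ₗ Coalgebra.comul ∘ₗ (MulOpposite.opLinearEquiv k).symm.toLinearMap

@[simp]
lemma opComul_apply (a : Aᵐᵒᵖ) :
    opComul k A a = opSwap k A A (Coalgebra.comul a.unop) := rfl

/-- The linear map `z ⊗ (a ⊗ b) ↦ b ⊗ (a ⊗ g z)`. -/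
noncomputable def opReverse {E : Type u} [AddCommGroup E] [Module k E] (g : Rᵐᵒᵖ →ₗ[k] E) :
    R ⊗[k] (A ⊗[k] A) →ₗ[k] Aᵐᵒᵖ ⊗[k] (Aᵐᵒᵖ ⊗[k] E) :=
  (TensorProduct.assoc k Aᵐᵒᵖ Aᵐᵒᵖ E).toLinearMap ∘ₗ (TensorProduct.comm k E _).toLinearMap ∘ₗ
    TensorProduct.map (g ∘ₗ (MulOpposite.opLinearEquiv k).toLinearMap) (opSwap k A A).toLinearMap

lemma assoc_rTensor_opComul {E : Type u} [AddCommGroup E] [Module k E] (g : Rᵐᵒᵖ →ₗ[k] E)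
    (t : R ⊗[k] A) :
    TensorProduct.assoc k Aᵐᵒᵖ Aᵐᵒᵖ E
        ((opComul k A).rTensor E (g.lTensor Aᵐᵒᵖ (opSwap k A R t)))
      = opReverse g (Coalgebra.comul.lTensor R t) := by
  induction t with
  | zero => simp
  | add t t' h h' => simp only [map_add, h, h']
  | tmul z a => simp [opReverse]

lemma lTensor_opSwap {E : Type u} [AddCommGroup E] [Module k E] (g : Rᵐᵒᵖ →ₗ[k] E)
    (ρ : R →ₗ[k] R ⊗[k] A) (δ : E →ₗ[k] Aᵐᵒᵖ ⊗[k] E)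
    (h : ∀ z, δ (g (MulOpposite.op z)) = g.lTensor Aᵐᵒᵖ (opSwap k A R (ρ z))) (t : R ⊗[k] A) :
    δ.lTensor Aᵐᵒᵖ (g.lTensor Aᵐᵒᵖ (opSwap k A R t))
      = opReverse g (TensorProduct.assoc k R A A (ρ.rTensor A t)) := by
  induction t with
  | zero => simp
  | add t t' h h' => simp only [map_add, h, h']
  | tmul z a =>
    simp only [opSwap_tmul, LinearMap.lTensor_tmul, LinearMap.rTensor_tmul, h]
    induction ρ z with
    | zero => simp
    | add t t' h h' => simp only [map_add, TensorProduct.add_tmul, TensorProduct.tmul_add, h, h']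
    | tmul w b => simp [opReverse]

/-- The Galois datum of a right Galois object. -/
noncomputable def rightDatum (c : RightComodAlg k A R) (h : c.IsGalois) :
    GaloisDatum k Aᵐᵒᵖ (R ⊗[k] Rᵐᵒᵖ) R where
  Δ := opComul k A
  ε := AlgHom.fromOpposite (Bialgebra.counitAlgHom k A) fun _ _ => Commute.all _ _
  S := (MulOpposite.opLinearEquiv k).toLinearMap ∘ₗ HopfAlgebra.antipode k ∘ₗ
    (MulOpposite.opLinearEquiv k).symm.toLinearMap
  comul_coassoc := by
    refine LinearMap.ext fun a => ?_
    have h₁ := assoc_rTensor_opComul (k := k) (LinearMap.id : Aᵐᵒᵖ →ₗ[k] Aᵐᵒᵖ)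
      (Coalgebra.comul (R := k) a.unop)
    have h₂ := lTensor_opSwap (LinearMap.id : Aᵐᵒᵖ →ₗ[k] Aᵐᵒᵖ) Coalgebra.comul (opComul k A)
      (fun z => by simp) (Coalgebra.comul (R := k) a.unop)
    rw [Coalgebra.coassoc_apply, ← h₁] at h₂
    simp only [LinearMap.lTensor_id, LinearMap.id_apply] at h₂
    exact h₂.symm
  comul_counit := by
    ext a
    have key (t : A ⊗[k] A) : TensorProduct.rid k Aᵐᵒᵖ
        ((AlgHom.fromOpposite (Bialgebra.counitAlgHom k A) fun _ _ => Commute.all _ _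
          ).toLinearMap.lTensor Aᵐᵒᵖ (opSwap k A A t))
        = MulOpposite.op (TensorProduct.lid k A (Coalgebra.counit.rTensor A t)) := by
      induction t with
      | zero => simp
      | add t t' h h' => simp only [map_add, MulOpposite.op_add, h, h']
      | tmul a z => simp
    simp only [LinearMap.comp_apply, LinearEquiv.coe_coe, LinearMap.id_apply, opComul_apply]
    rw [key]
    simp
  antipode_left := by
    ext a
    have key (t : A ⊗[k] A) : LinearMap.mul' k Aᵐᵒᵖ
        (((MulOpposite.opLinearEquiv k).toLinearMap ∘ₗ HopfAlgebra.antipode k ∘ₗ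
          (MulOpposite.opLinearEquiv k).symm.toLinearMap).rTensor Aᵐᵒᵖ (opSwap k A A t))
        = MulOpposite.op (LinearMap.mul' k A ((HopfAlgebra.antipode k).lTensor A t)) := by
      induction t with
      | zero => simp
      | add t t' h h' => simp only [map_add, MulOpposite.op_add, h, h']
      | tmul a z => simp
    simp [key]
  antipode_right := by
    ext a
    have key (t : A ⊗[k] A) : LinearMap.mul' k Aᵐᵒᵖ
        (((MulOpposite.opLinearEquiv k).toLinearMap ∘ₗ HopfAlgebra.antipode k ∘ₗ
          (MulOpposite.opLinearEquiv k).symm.toLinearMap).lTensor Aᵐᵒᵖ (opSwap k A A t))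
        = MulOpposite.op (LinearMap.mul' k A ((HopfAlgebra.antipode k).rTensor A t)) := by
      induction t with
      | zero => simp
      | add t t' h h' => simp only [map_add, MulOpposite.op_add, h, h']
      | tmul a z => simp
    simp [key]
  δ := rightEnvCoact c
  coact_coassoc := by
    refine TensorProduct.ext' fun x y => ?_
    have h₁ := assoc_rTensor_opComul (TensorProduct.mk k R Rᵐᵒᵖ x) (c.ρ y.unop)
    have h₂ := lTensor_opSwap (TensorProduct.mk k R Rᵐᵒᵖ x) c.ρ (rightEnvCoact c).toLinearMap
      (fun z => rightEnvCoact_tmul c x _) (c.ρ y.unop)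
    have h₃ := LinearMap.congr_fun c.coassoc y.unop
    simp only [LinearMap.comp_apply, LinearEquiv.coe_coe] at h₃
    rw [h₃, ← h₁] at h₂
    simp only [LinearMap.comp_apply, LinearEquiv.coe_coe, AlgHom.toLinearMap_apply,
      rightEnvCoact_tmul]
    exact h₂.symm
  coact_counit := by
    refine TensorProduct.ext' fun x y => ?_
    have key (t : R ⊗[k] A) : TensorProduct.lid k (R ⊗[k] Rᵐᵒᵖ)
        ((AlgHom.fromOpposite (Bialgebra.counitAlgHom k A) fun _ _ => Commute.all _ _
          ).toLinearMap.rTensor (R ⊗[k] Rᵐᵒᵖ)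
          ((TensorProduct.mk k R Rᵐᵒᵖ x).lTensor Aᵐᵒᵖ (opSwap k A R t)))
        = x ⊗ₜ MulOpposite.op (TensorProduct.rid k R (Coalgebra.counit.lTensor R t)) := by
      induction t with
      | zero => simp
      | add t t' h h' => simp only [map_add, MulOpposite.op_add, TensorProduct.tmul_add, h, h']
      | tmul z a => simp
    have := LinearMap.congr_fun c.counit_comp y.unop
    simp only [LinearMap.comp_apply, LinearEquiv.coe_coe, LinearMap.id_apply] at this
    simp only [LinearMap.comp_apply, LinearEquiv.coe_coe, AlgHom.toLinearMap_apply,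
      rightEnvCoact_tmul, LinearMap.id_apply]
    rw [key, this, MulOpposite.op_unop]
  r := 1
  r_ne_zero := by
    have := h.1
    exact one_ne_zero
  bijective := by
    have : ((LinearMap.toSpanSingleton (R ⊗[k] Rᵐᵒᵖ) R 1).restrictScalars k).lTensor Aᵐᵒᵖ ∘ₗ
        (rightEnvCoact c).toLinearMap =
        ((MulOpposite.opLinearEquiv k).symm.toLinearMap.lTensor Aᵐᵒᵖ ∘ₗ
          (opSwap k A R).toLinearMap) ∘ₗ c.can ∘ₗ
          ((MulOpposite.opLinearEquiv k).symm.toLinearMap.lTensor R : R ⊗[k] Rᵐᵒᵖ →ₗ[k] R ⊗[k] R) := by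
      refine TensorProduct.ext' fun x y => ?_
      simp only [LinearMap.comp_apply, AlgHom.toLinearMap_apply, rightEnvCoact_tmul,
        RightComodAlg.can, LinearMap.lTensor_tmul, LinearEquiv.coe_coe,
        MulOpposite.coe_opLinearEquiv_symm]
      induction c.ρ y.unop with
      | zero => simp
      | add t t' h h' => simp only [map_add, TensorProduct.tmul_add, h, h']
      | tmul z a => simp [env_smul_one]
    rw [this]
    exact (((opSwap k A R).trans (LinearEquiv.lTensor Aᵐᵒᵖ
      (MulOpposite.opLinearEquiv k).symm)).bijective.comp h.2).comp
        (LinearEquiv.lTensor R (MulOpposite.opLinearEquiv k).symm).bijective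

end Right

section Regular

attribute [local instance] TensorProduct.Algebra.module envTower

variable (k A : Type u) [Field k] [Ring A] [HopfAlgebra k A]

/-- A Hopf algebra as a left comodule algebra over itself. -/
noncomputable def regularLeft : LeftComodAlg k A A where
  lam := Coalgebra.comul
  coassoc := Coalgebra.coassoc
  counit_comp := by
    ext a
    simp
  map_one := Bialgebra.comul_one
  map_mul := Bialgebra.comul_mul

/-- A Hopf algebra as a right comodule algebra over itself. -/
noncomputable def regularRight : RightComodAlg k A A where
  ρ := Coalgebra.comul
  coassoc := Coalgebra.coassoc
  counit_comp := by
    ext a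
    simp
  map_one := Bialgebra.comul_one
  map_mul := Bialgebra.comul_mul

variable {k A}

/-- The map `x ⊗ y ↦ x₍₁₎ ⊗ g(x₍₂₎) y`. -/
noncomputable def leftShear (g : A →ₗ[k] A) : A ⊗[k] A →ₗ[k] A ⊗[k] A :=
  (LinearMap.mul' k A).lTensor A ∘ₗ (TensorProduct.assoc k A A A).toLinearMap ∘ₗ
    (g.lTensor A ∘ₗ Coalgebra.comul).rTensor A

lemma leftShear_leftInverse {i j : A →ₗ[k] A}
    (h : LinearMap.mul' k A ∘ₗ TensorProduct.map i j ∘ₗ Coalgebra.comul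
      = Algebra.linearMap k A ∘ₗ Coalgebra.counit) :
    Function.LeftInverse (leftShear i) (leftShear j) := by
  intro x
  induction x with
  | zero => simp
  | add x x' h h' => simp only [map_add, h, h']
  | tmul a y =>
    have h1 : ∀ t : A ⊗[k] A, leftShear i ((LinearMap.mul' k A).lTensor A
          (TensorProduct.assoc k A A A (j.lTensor A t ⊗ₜ y))) =
        (LinearMap.mulRight k y ∘ₗ LinearMap.mul' k A ∘ₗ TensorProduct.map i j).lTensor A
          (TensorProduct.assoc k A A A (Coalgebra.comul.rTensor A t)) := by
      intro t
      induction t with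
      | zero => simp
      | add t t' h h' => simp only [map_add, TensorProduct.add_tmul, h, h']
      | tmul b c =>
        simp only [leftShear, LinearMap.lTensor_tmul, LinearMap.rTensor_tmul, LinearMap.comp_apply,
          TensorProduct.assoc_tmul, LinearMap.mul'_apply, LinearEquiv.coe_coe]
        induction Coalgebra.comul (R := k) b with
        | zero => simp
        | add t t' h h' => simp only [map_add, TensorProduct.add_tmul, h, h']
        | tmul b d => simp [mul_assoc]
    refine (h1 (Coalgebra.comul a)).trans ?_
    rw [Coalgebra.coassoc_apply, ← LinearMap.lTensor_comp_apply, LinearMap.comp_assoc,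
      LinearMap.comp_assoc, h, ← LinearMap.comp_assoc, LinearMap.lTensor_comp_apply,
      Coalgebra.lTensor_counit_comul]
    simp

/-- The map `x ⊗ y ↦ x g(y₍₁₎) ⊗ y₍₂₎`. -/
noncomputable def rightShear (g : A →ₗ[k] A) : A ⊗[k] A →ₗ[k] A ⊗[k] A :=
  (LinearMap.mul' k A).rTensor A ∘ₗ (TensorProduct.assoc k A A A).symm.toLinearMap ∘ₗ
    (g.rTensor A ∘ₗ Coalgebra.comul).lTensor A

lemma rightShear_leftInverse {i j : A →ₗ[k] A}
    (h : LinearMap.mul' k A ∘ₗ TensorProduct.map j i ∘ₗ Coalgebra.comul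
      = Algebra.linearMap k A ∘ₗ Coalgebra.counit) :
    Function.LeftInverse (rightShear i) (rightShear j) := by
  intro x
  induction x with
  | zero => simp
  | add x x' h h' => simp only [map_add, h, h']
  | tmul y a =>
    have h1 : ∀ t : A ⊗[k] A, rightShear i ((LinearMap.mul' k A).rTensor A
          ((TensorProduct.assoc k A A A).symm (y ⊗ₜ j.rTensor A t))) =
        (LinearMap.mulLeft k y ∘ₗ LinearMap.mul' k A ∘ₗ TensorProduct.map j i).rTensor A
          ((TensorProduct.assoc k A A A).symm (Coalgebra.comul.lTensor A t)) := by
      intro t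
      induction t with
      | zero => simp
      | add t t' h h' => simp only [map_add, TensorProduct.tmul_add, h, h']
      | tmul b c =>
        simp only [rightShear, LinearMap.lTensor_tmul, LinearMap.rTensor_tmul, LinearMap.comp_apply,
          TensorProduct.assoc_symm_tmul, LinearMap.mul'_apply, LinearEquiv.coe_coe]
        induction Coalgebra.comul (R := k) c with
        | zero => simp
        | add t t' h h' => simp only [map_add, TensorProduct.tmul_add, h, h']
        | tmul b d => simp [mul_assoc]
    refine (h1 (Coalgebra.comul a)).trans ?_
    rw [Coalgebra.coassoc_symm_apply, ← LinearMap.rTensor_comp_apply, LinearMap.comp_assoc,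
      LinearMap.comp_assoc, h, ← LinearMap.comp_assoc, LinearMap.rTensor_comp_apply,
      Coalgebra.rTensor_counit_comul]
    simp

lemma mul_map_id_antipode : LinearMap.mul' k A ∘ₗ
    TensorProduct.map LinearMap.id (HopfAlgebra.antipode k) ∘ₗ Coalgebra.comul
      = Algebra.linearMap k A ∘ₗ Coalgebra.counit :=
  HopfAlgebra.mul_antipode_lTensor_comul

lemma mul_map_antipode_id : LinearMap.mul' k A ∘ₗ
    TensorProduct.map (HopfAlgebra.antipode k) LinearMap.id ∘ₗ Coalgebra.comul
      = Algebra.linearMap k A ∘ₗ Coalgebra.counit :=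
  HopfAlgebra.mul_antipode_rTensor_comul

variable (k A)

lemma regularLeft_isGalois : (regularLeft k A).IsGalois := by
  have h : (regularLeft k A).can = leftShear LinearMap.id := by
    rw [leftShear, LinearMap.lTensor_id, LinearMap.id_comp]
    rfl
  refine ⟨(Bialgebra.counitAlgHom k A).toRingHom.domain_nontrivial, ?_⟩
  rw [h]
  exact Function.bijective_iff_has_inverse.2 ⟨leftShear (HopfAlgebra.antipode k),
    leftShear_leftInverse mul_map_antipode_id, leftShear_leftInverse mul_map_id_antipode⟩

lemma regularRight_isGalois : (regularRight k A).IsGalois := by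
  have h : (regularRight k A).can = rightShear LinearMap.id := by
    rw [rightShear, LinearMap.rTensor_id, LinearMap.id_comp]
    rfl
  refine ⟨(Bialgebra.counitAlgHom k A).toRingHom.domain_nontrivial, ?_⟩
  rw [h]
  exact Function.bijective_iff_has_inverse.2 ⟨rightShear (HopfAlgebra.antipode k),
    rightShear_leftInverse mul_map_id_antipode, rightShear_leftInverse mul_map_antipode_id⟩

lemma counit_smul (z : A ⊗[k] Aᵐᵒᵖ) (m : A) :
    Coalgebra.counit (R := k) (z • m)
      = Coalgebra.counit (R := k) (z • (1 : A)) * Coalgebra.counit m := by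
  have h₀ (m : A) : (0 : A ⊗[k] Aᵐᵒᵖ) • m = 0 :=
    LinearMap.congr_fun (map_zero (TensorProduct.Algebra.moduleAux (R := k) (A := A) (B := Aᵐᵒᵖ))) m
  induction z with
  | zero => rw [h₀, h₀, map_zero, zero_mul]
  | add z z' h h' => rw [add_smul, add_smul, map_add, map_add, add_mul, h, h']
  | tmul x y =>
    rw [TensorProduct.Algebra.smul_def, TensorProduct.Algebra.smul_def]
    simp only [MulOpposite.smul_eq_mul_unop, smul_eq_mul,
      Bialgebra.counit_mul, Bialgebra.counit_one]
    ring

lemma regularRight_hasInvariantFunctional :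
    (rightDatum (regularRight k A) (regularRight_isGalois k A)).HasInvariantFunctional := by
  refine ⟨Coalgebra.counit, Bialgebra.counit_one, fun a y => ?_⟩
  have h := GaloisDatum.κ_smul_r (rightDatum (regularRight k A) (regularRight_isGalois k A)) a
  rw [counit_smul]
  congr 1
  refine (congrArg (Coalgebra.counit (R := k)) h).trans ?_
  rw [map_smul]
  exact (congrArg _ Bialgebra.counit_one).trans (mul_one _)

variable {k A}

lemma cdHopf_eq_cdAlg_of_isGalois_left {R : Type u} [Ring R] [Algebra k R]
    (c : LeftComodAlg k A R) (hc : c.IsGalois) (hfin : cdHopf k A ≠ ⊤) :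
    cdHopf k A = cdAlg k R :=
  (leftDatum c hc).extPD_eq (Or.inr hfin)

lemma cdHopf_eq_cdAlg_of_isGalois_right {R : Type u} [Ring R] [Algebra k R]
    (c : RightComodAlg k A R) (hc : c.IsGalois) (hfin : cdHopf k A ≠ ⊤) :
    cdHopf k A = cdAlg k R := by
  have h₁ := cdHopf_eq_cdAlg_of_isGalois_left _ (regularLeft_isGalois k A) hfin
  have h₂ : _ = cdAlg k A := (rightDatum _ (regularRight_isGalois k A)).extPD_eq
    (Or.inl (regularRight_hasInvariantFunctional k A))
  rw [h₁, ← h₂] at hfin ⊢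
  exact (rightDatum c hc).extPD_eq (Or.inr hfin)

end Regular

/-- If `A` is a cosemisimple Hopf algebra of finite cohomological
dimension and `R` is a left or right `A`-Galois object, then `cd(A) = cd(R)`. -/
theorem cd_eq_cd_galois_of_cosemisimple (k A R : Type u) [Field k] [IsAlgClosed k]
    [Ring A] [HopfAlgebra k A] [Ring R] [Algebra k R]
    (hcosemisimple : IsCosemisimple k A)
    (hfin : cdHopf k A ≠ ⊤)
    (hGalois : IsGaloisObject k A R) :
    cdHopf k A = cdAlg k R := by
  rcases hGalois with ⟨c, hc⟩ | ⟨c, hc⟩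
  · exact cdHopf_eq_cdAlg_of_isGalois_left c hc hfin
  · exact cdHopf_eq_cdAlg_of_isGalois_right c hc hfin
end
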